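/- arXiv:2307.10418 — 8 statements merged into one kernel-verified Lean document; each statement's English description precedes it below -/
import Mathlib

section
/- Let 𝔤 be a finite-dimensional complex Lie algebra, let f, g ∈ S(𝔤) be semi-invariants (with weights χ_f, χ_g ∈ 𝔤*), and let a ∈ 𝔤*. Then for all λ, μ ∈ ℂ the shifted polynomials F(x) = f(a + λx) and G(x) = g(a + μx) are in involution with respect to the Lie–Poisson bracket: {F, G}(x) = 0 for every x ∈ 𝔤*. -/
/-- A function on the dual space `𝔤* ≅ L →L[ℂ] ℂ` is a polynomial function
(i.e. corresponds to an element of the symmetric algebra `S(𝔤)`) if it lies in the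
`ℂ`-subalgebra of functions generated by the evaluations `x ↦ ⟨x, ξ⟩`, `ξ ∈ 𝔤`. -/
def IsPolyFun (L : Type*) [NormedAddCommGroup L] [NormedSpace ℂ L]
    (p : (L →L[ℂ] ℂ) → ℂ) : Prop :=
  p ∈ Algebra.adjoin ℂ (Set.range fun ξ : L => fun x : L →L[ℂ] ℂ => x ξ)

/-- `dp` represents the differential of `p : 𝔤* → ℂ`, with `dp x ∈ 𝔤` identified with a
linear functional on `𝔤*` via the canonical isomorphism `𝔤 ≅ 𝔤**`:
`(fderiv ℂ p x) v = ⟨v, dp x⟩` for all `v ∈ 𝔤*`. -/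
def RepDeriv (L : Type*) [NormedAddCommGroup L] [NormedSpace ℂ L]
    (p : (L →L[ℂ] ℂ) → ℂ) (dp : (L →L[ℂ] ℂ) → L) : Prop :=
  ∀ x v : L →L[ℂ] ℂ, fderiv ℂ p x v = v (dp x)

/-- The bilinear map `B` is a Lie bracket on the complex vector space `L` (which carries a
norm only in order to speak about differentials and analyticity; in finite dimension all
norms are equivalent): `B` is alternating and satisfies the Jacobi identity. -/
def IsLieBracket (L : Type*) [NormedAddCommGroup L] [NormedSpace ℂ L]
    (B : L →ₗ[ℂ] L →ₗ[ℂ] L) : Prop :=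
  (∀ ξ : L, B ξ ξ = 0) ∧
    ∀ ξ η ζ : L, B ξ (B η ζ) = B (B ξ η) ζ + B η (B ξ ζ)

/-- `g ∈ S(𝔤)` is a semi-invariant with weight `χ ∈ 𝔤*`:
`⟨x, [ξ, dg(x)]⟩ = χ(ξ) · g(x)` for all `ξ ∈ 𝔤`, `x ∈ 𝔤*`. -/
def IsSemiInvariant (L : Type*) [NormedAddCommGroup L] [NormedSpace ℂ L]
    (B : L →ₗ[ℂ] L →ₗ[ℂ] L) (g : (L →L[ℂ] ℂ) → ℂ) (χ : L →L[ℂ] ℂ) : Prop :=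
  IsPolyFun L g ∧ g ≠ 0 ∧
    ∃ dg : (L →L[ℂ] ℂ) → L, RepDeriv L g dg ∧
      ∀ (ξ : L) (x : L →L[ℂ] ℂ), x (B ξ (dg x)) = χ ξ * g x

section SemiInvariants

variable {L : Type*} [NormedAddCommGroup L] [NormedSpace ℂ L]

theorem add_zero_smul_functional (x v : L →L[ℂ] ℂ) : x + (0 : ℂ) • v = x := by
  ext ξ
  simp

theorem IsPolyFun.contDiff {p : (L →L[ℂ] ℂ) → ℂ} (hp : IsPolyFun L p) : ContDiff ℂ 1 p := by
  induction hp using Algebra.adjoin_induction with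
  | mem p hp =>
    obtain ⟨ξ, rfl⟩ := hp
    exact (ContinuousLinearMap.apply ℂ ℂ ξ).contDiff
  | algebraMap r => exact contDiff_const
  | add p q _ _ hp hq => exact hp.add hq
  | mul p q _ _ hp hq => exact hp.mul hq

theorem IsPolyFun.exists_polynomial_on_line {p : (L →L[ℂ] ℂ) → ℂ} (hp : IsPolyFun L p)
    (x v : L →L[ℂ] ℂ) : ∃ P : Polynomial ℂ, ∀ t : ℂ, p (x + t • v) = P.eval t := by
  induction hp using Algebra.adjoin_induction with
  | mem p hp =>
    obtain ⟨ξ, rfl⟩ := hp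
    exact ⟨.C (x ξ) + .X * .C (v ξ), fun t => by simp [mul_comm (v ξ)]⟩
  | algebraMap r => exact ⟨.C r, fun t => by simp⟩
  | add p q _ _ hp hq =>
    obtain ⟨P, hP⟩ := hp
    obtain ⟨Q, hQ⟩ := hq
    exact ⟨P + Q, fun t => by simp [hP, hQ]⟩
  | mul p q _ _ hp hq =>
    obtain ⟨P, hP⟩ := hp
    obtain ⟨Q, hQ⟩ := hq
    exact ⟨P * Q, fun t => by simp [hP, hQ]⟩

theorem IsPolyFun.eq_zero_of_mul_eq_zero {g h : (L →L[ℂ] ℂ) → ℂ} (hg : IsPolyFun L g)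
    (hg0 : g ≠ 0) (hh : Continuous h) (hgh : ∀ x, h x * g x = 0) (x : L →L[ℂ] ℂ) :
    h x = 0 := by
  obtain ⟨y, hy⟩ := Function.ne_iff.mp hg0
  obtain ⟨P, hP⟩ := hg.exists_polynomial_on_line x (y - x)
  have hP0 : P ≠ 0 := by
    rintro rfl
    exact hy (by simpa using hP 1)
  have hdense : Dense {t : ℂ | P.IsRoot t}ᶜ :=
    (Polynomial.finite_setOfPred_isRoot hP0).countable.dense_compl ℂ
  have hcont : Continuous fun t : ℂ => h (x + t • (y - x)) := by fun_prop
  have hzero : (fun t : ℂ => h (x + t • (y - x))) = fun _ => 0 := by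
    refine hcont.ext_on hdense continuous_const fun t ht => ?_
    refine (mul_eq_zero.mp (hgh (x + t • (y - x)))).resolve_right ?_
    rw [hP]
    exact ht
  have h0 := congrFun hzero 0
  rwa [add_zero_smul_functional] at h0

theorem Polynomial.derivative_eq_zero_of_eq_C_mul {P : Polynomial ℂ} {k : ℂ}
    (h : derivative P = C k * P) : derivative P = 0 := by
  by_cases hP : P = 0
  · simp [hP]
  by_cases hk : k = 0
  · simp [h, hk]
  · have hlt := degree_derivative_lt hP
    rw [h, degree_C_mul hk] at hlt
    exact absurd hlt (lt_irrefl _)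

theorem hasDerivAt_comp_line {p : (L →L[ℂ] ℂ) → ℂ} (hp : Differentiable ℂ p)
    (x v : L →L[ℂ] ℂ) (t : ℂ) :
    HasDerivAt (fun s : ℂ => p (x + s • v)) (fderiv ℂ p (x + t • v) v) t := by
  have hline : HasDerivAt (fun s : ℂ => x + s • v) v t := by
    simpa using ((hasDerivAt_id t).smul_const v).const_add x
  exact (hp _).hasFDerivAt.comp_hasDerivAt t hline

theorem IsPolyFun.differentiable {p : (L →L[ℂ] ℂ) → ℂ} (hp : IsPolyFun L p) :
    Differentiable ℂ p :=
  hp.contDiff.differentiable one_ne_zero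

theorem IsPolyFun.continuous_fderiv_apply {p : (L →L[ℂ] ℂ) → ℂ} (hp : IsPolyFun L p)
    (v : L →L[ℂ] ℂ) : Continuous fun x => fderiv ℂ p x v :=
  (hp.contDiff.continuous_fderiv one_ne_zero).clm_apply continuous_const

theorem IsLieBracket.skew {B : L →ₗ[ℂ] L →ₗ[ℂ] L} (hB : IsLieBracket L B) (ξ η : L) :
    B ξ η = -B η ξ := by
  have h := hB.1 (ξ + η)
  simp only [map_add, LinearMap.add_apply, hB.1, zero_add, add_zero] at h
  exact eq_neg_of_add_eq_zero_right h

theorem IsSemiInvariant.fderiv_weight_mul_add {B : L →ₗ[ℂ] L →ₗ[ℂ] L} (hB : IsLieBracket L B)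
    {f g : (L →L[ℂ] ℂ) → ℂ} {χf χg : L →L[ℂ] ℂ}
    (hf : IsSemiInvariant L B f χf) (hg : IsSemiInvariant L B g χg) (x : L →L[ℂ] ℂ) :
    fderiv ℂ f x χg * g x + fderiv ℂ g x χf * f x = 0 := by
  obtain ⟨-, -, df, hdf, hf⟩ := hf
  obtain ⟨-, -, dg, hdg, hg⟩ := hg
  rw [hdf, hdg, ← hf, ← hg, hB.skew (df x) (dg x), map_neg, neg_add_cancel]

theorem IsSemiInvariant.fderiv_weight_self {B : L →ₗ[ℂ] L →ₗ[ℂ] L} (hB : IsLieBracket L B)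
    {g : (L →L[ℂ] ℂ) → ℂ} {χ : L →L[ℂ] ℂ} (hg : IsSemiInvariant L B g χ)
    (x : L →L[ℂ] ℂ) : fderiv ℂ g x χ = 0 := by
  refine hg.1.eq_zero_of_mul_eq_zero hg.2.1 (hg.1.continuous_fderiv_apply χ) (fun y => ?_) x
  exact self_eq_neg.mp (eq_neg_of_add_eq_zero_left (hg.fderiv_weight_mul_add hB hg y))

theorem IsSemiInvariant.add_smul_weight {B : L →ₗ[ℂ] L →ₗ[ℂ] L} (hB : IsLieBracket L B)
    {g : (L →L[ℂ] ℂ) → ℂ} {χ : L →L[ℂ] ℂ} (hg : IsSemiInvariant L B g χ)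
    (x : L →L[ℂ] ℂ) (t : ℂ) : g (x + t • χ) = g x := by
  have hderiv := hasDerivAt_comp_line hg.1.differentiable x χ
  have h := is_const_of_deriv_eq_zero (fun s => (hderiv s).differentiableAt)
    (fun s => (hderiv s).deriv.trans (hg.fderiv_weight_self hB _)) t 0
  rwa [add_zero_smul_functional] at h

/-- A semi-invariant is constant in the direction of the weight of any other semi-invariant. -/
theorem IsSemiInvariant.fderiv_weight {B : L →ₗ[ℂ] L →ₗ[ℂ] L} (hB : IsLieBracket L B)
    {f g : (L →L[ℂ] ℂ) → ℂ} {χf χg : L →L[ℂ] ℂ}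
    (hf : IsSemiInvariant L B f χf) (hg : IsSemiInvariant L B g χg) (x : L →L[ℂ] ℂ) :
    fderiv ℂ f x χg = 0 := by
  refine hg.1.eq_zero_of_mul_eq_zero hg.2.1 (hf.1.continuous_fderiv_apply χg) (fun y => ?_) x
  by_cases hy : g y = 0
  · simp [hy]
  obtain ⟨P, hP⟩ := hf.1.exists_polynomial_on_line y χg
  have hP' (t : ℂ) : fderiv ℂ f (y + t • χg) χg = P.derivative.eval t := by
    have h := hasDerivAt_comp_line hf.1.differentiable y χg t
    simp only [hP] at h
    exact h.unique (P.hasDerivAt t)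
  have hg' (t : ℂ) : fderiv ℂ g (y + t • χg) = fderiv ℂ g y := by
    rw [← fderiv_comp_add_right]
    simp only [hg.add_smul_weight hB]
  have hode : P.derivative = .C (-(fderiv ℂ g y χf) / g y) * P := by
    refine Polynomial.funext fun t => ?_
    have h := hf.fderiv_weight_mul_add hB hg (y + t • χg)
    rw [hP', hg', hP, hg.add_smul_weight hB] at h
    rw [Polynomial.eval_mul, Polynomial.eval_C]
    field_simp
    linear_combination h
  have h0 := hP' 0
  rw [Polynomial.derivative_eq_zero_of_eq_C_mul hode, Polynomial.eval_zero,
    add_zero_smul_functional] at h0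
  rw [h0, zero_mul]

theorem RepDeriv.shift_eq {p : (L →L[ℂ] ℂ) → ℂ} {dp dq : (L →L[ℂ] ℂ) → L}
    (hdp : RepDeriv L p dp) (hp : Differentiable ℂ p) {a : L →L[ℂ] ℂ} {c : ℂ}
    (hdq : RepDeriv L (fun x => p (a + c • x)) dq) (x : L →L[ℂ] ℂ) :
    dq x = c • dp (a + c • x) := by
  refine (SeparatingDual.eq_iff_forall_dual_eq (R := ℂ)).mpr fun v => ?_
  have hline : HasFDerivAt (fun y : L →L[ℂ] ℂ => a + c • y)
      (c • ContinuousLinearMap.id ℂ (L →L[ℂ] ℂ)) x :=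
    ((hasFDerivAt_id x).const_smul c).const_add a
  have h := ((hp _).hasFDerivAt.comp x hline).fderiv
  rw [← hdq x v, map_smul, ← hdp]
  simpa [Function.comp_def] using congrArg (fun T => T v) h

theorem RepDeriv.unique {p : (L →L[ℂ] ℂ) → ℂ} {dp dq : (L →L[ℂ] ℂ) → L}
    (hdp : RepDeriv L p dp) (hdq : RepDeriv L p dq) : dp = dq := by
  funext x
  refine (SeparatingDual.eq_iff_forall_dual_eq (R := ℂ)).mpr fun v => ?_
  rw [← hdp x v, hdq x v]

theorem IsSemiInvariant.apply_bracket {B : L →ₗ[ℂ] L →ₗ[ℂ] L} {g : (L →L[ℂ] ℂ) → ℂ}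
    {χ : L →L[ℂ] ℂ} (hg : IsSemiInvariant L B g χ) {dg : (L →L[ℂ] ℂ) → L}
    (hdg : RepDeriv L g dg) (ξ : L) (x : L →L[ℂ] ℂ) : x (B ξ (dg x)) = χ ξ * g x := by
  obtain ⟨-, -, dg', hdg', h⟩ := hg
  rw [hdg.unique hdg', h]

theorem IsSemiInvariant.apply_bracket_of_ne {B : L →ₗ[ℂ] L →ₗ[ℂ] L} (hB : IsLieBracket L B)
    {f g : (L →L[ℂ] ℂ) → ℂ} {χf χg : L →L[ℂ] ℂ}
    (hf : IsSemiInvariant L B f χf) (hg : IsSemiInvariant L B g χg)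
    {df dg : (L →L[ℂ] ℂ) → L} (hdf : RepDeriv L f df) (hdg : RepDeriv L g dg)
    (a x : L →L[ℂ] ℂ) {c d : ℂ} (hcd : c ≠ d) :
    x (B (df (a + c • x)) (dg (a + d • x))) = 0 := by
  have hy : (a + c • x) (B (df (a + c • x)) (dg (a + d • x))) = 0 := by
    rw [hB.skew, map_neg, hf.apply_bracket hdf, ← hdg, hg.fderiv_weight hB hf, zero_mul, neg_zero]
  have hz : (a + d • x) (B (df (a + c • x)) (dg (a + d • x))) = 0 := by
    rw [hg.apply_bracket hdg, ← hdf, hf.fderiv_weight hB hg, zero_mul]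
  refine (mul_eq_zero.mp ?_).resolve_left (sub_ne_zero.mpr hcd)
  simp only [add_apply, smul_apply, smul_eq_mul] at hy hz
  linear_combination hy - hz

theorem IsSemiInvariant.apply_bracket_shift [FiniteDimensional ℂ L]
    {B : L →ₗ[ℂ] L →ₗ[ℂ] L} (hB : IsLieBracket L B)
    {f g : (L →L[ℂ] ℂ) → ℂ} {χf χg : L →L[ℂ] ℂ}
    (hf : IsSemiInvariant L B f χf) (hg : IsSemiInvariant L B g χg)
    {df dg : (L →L[ℂ] ℂ) → L} (hdf : RepDeriv L f df) (hdg : RepDeriv L g dg)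
    (a x : L →L[ℂ] ℂ) (c d : ℂ) :
    x (B (df (a + c • x)) (dg (a + d • x))) = 0 := by
  let v : L →L[ℂ] ℂ := x.comp (B (df (a + c • x))).toContinuousLinearMap
  have hv (t : ℂ) : x (B (df (a + c • x)) (dg (a + t • x))) = fderiv ℂ g (a + t • x) v :=
    (hdg _ v).symm
  have hcont : Continuous fun t : ℂ => fderiv ℂ g (a + t • x) v :=
    (hg.1.continuous_fderiv_apply v).comp (by fun_prop)
  have hzero : (fun t : ℂ => fderiv ℂ g (a + t • x) v) = fun _ => 0 := by
    refine hcont.ext_on (dense_compl_singleton c) continuous_const fun t ht => ?_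
    simp only [← hv]
    exact hf.apply_bracket_of_ne hB hg hdf hdg a x (Ne.symm ht)
  rw [hv]
  exact congrFun hzero d

end SemiInvariants

/-- Shifts of semi-invariants are in involution w.r.t. the Lie–Poisson bracket
`{F,G}(x) = ⟨x, [dF(x), dG(x)]⟩`: for semi-invariants `f, g` and `λ, μ ∈ ℂ`, the functions
`F(x) = f(a + λx)` and `G(x) = g(a + μx)` satisfy `{F,G}(x) = 0` for all `x ∈ 𝔤*`. -/
theorem shifts_of_semiInvariants_lie_poisson_involution
    {L : Type*} [NormedAddCommGroup L] [NormedSpace ℂ L] [FiniteDimensional ℂ L]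
    (B : L →ₗ[ℂ] L →ₗ[ℂ] L) (hB : IsLieBracket L B)
    (f g : (L →L[ℂ] ℂ) → ℂ) (χf χg : L →L[ℂ] ℂ)
    (hf : IsSemiInvariant L B f χf) (hg : IsSemiInvariant L B g χg)
    (a : L →L[ℂ] ℂ) (lam mu : ℂ)
    (F G : (L →L[ℂ] ℂ) → ℂ)
    (hF : F = fun x => f (a + lam • x)) (hG : G = fun x => g (a + mu • x))
    (dF dG : (L →L[ℂ] ℂ) → L)
    (hdF : RepDeriv L F dF) (hdG : RepDeriv L G dG) :
    ∀ x : L →L[ℂ] ℂ, x (B (dF x) (dG x)) = 0 := by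
  subst hF hG
  intro x
  obtain ⟨df, hdf, -⟩ := hf.2.2
  obtain ⟨dg, hdg, -⟩ := hg.2.2
  rw [hdf.shift_eq hf.1.differentiable hdF, hdg.shift_eq hg.1.differentiable hdG]
  simp [hf.apply_bracket_shift hB hg hdf hdg]
end

section
/- Let 𝔤 be a finite-dimensional complex Lie algebra, let g ∈ S(𝔤) be a semi-invariant with weight χ ∈ 𝔤*, and let a ∈ 𝔤*. Let U ⊆ 𝔤* be open and let λ: U → ℂ be an analytic function satisfying g(x − λ(x)a) = 0 for all x ∈ U. Let x₀ ∈ U be a point at which ⟨a, dg(x₀ − λ(x₀)a)⟩ ≠ 0. Then for every function h that is analytic in a neighbourhood of x₀ one has ⟨x₀, [dλ(x₀), dh(x₀)]⟩ = λ(x₀)·⟨a, [dλ(x₀), dh(x₀)]⟩, i.e. {λ, h}(x₀) = λ(x₀)·{λ, h}_a(x₀). -/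
/-- Lemma on roots of semi-invariants: if `λ : U → ℂ` is analytic with
`g(x − λ(x)a) = 0` on `U`, and `⟨a, dg(x₀ − λ(x₀)a)⟩ ≠ 0` at a point `x₀ ∈ U`, then for
every function `h` analytic in a neighbourhood of `x₀` one has
`⟨x₀, [dλ(x₀), dh(x₀)]⟩ = λ(x₀) · ⟨a, [dλ(x₀), dh(x₀)]⟩`,
i.e. `{λ, h}(x₀) = λ(x₀) · {λ, h}_a(x₀)`. -/
theorem root_of_semiInvariant_bracket_eq
    {L : Type*} [NormedAddCommGroup L] [NormedSpace ℂ L] [FiniteDimensional ℂ L]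
    (B : L →ₗ[ℂ] L →ₗ[ℂ] L) (hB : IsLieBracket L B)
    (g : (L →L[ℂ] ℂ) → ℂ) (χ : L →L[ℂ] ℂ)
    (hpoly : IsPolyFun L g) (hg0 : g ≠ 0)
    (dg : (L →L[ℂ] ℂ) → L) (hdg : RepDeriv L g dg)
    (hsemi : ∀ (ξ : L) (x : L →L[ℂ] ℂ), x (B ξ (dg x)) = χ ξ * g x)
    (a : L →L[ℂ] ℂ)
    (U : Set (L →L[ℂ] ℂ)) (hU : IsOpen U)
    (lam : (L →L[ℂ] ℂ) → ℂ) (hlam : AnalyticOnNhd ℂ lam U)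
    (hroot : ∀ x ∈ U, g (x - lam x • a) = 0)
    (x₀ : L →L[ℂ] ℂ) (hx₀ : x₀ ∈ U)
    (hnd : a (dg (x₀ - lam x₀ • a)) ≠ 0)
    (h : (L →L[ℂ] ℂ) → ℂ) (hh : AnalyticAt ℂ h x₀)
    (dl dh : L)
    (hdl : ∀ v : L →L[ℂ] ℂ, fderiv ℂ lam x₀ v = v dl)
    (hdh : ∀ v : L →L[ℂ] ℂ, fderiv ℂ h x₀ v = v dh) :
    x₀ (B dl dh) = lam x₀ * a (B dl dh) := by
  set y := x₀ - lam x₀ • a with hy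
  have hgd : DifferentiableAt ℂ g y := by
    by_contra hn
    apply hnd
    rw [← hdg y a, fderiv_zero_of_not_differentiableAt hn]
    rfl
  have hld : HasFDerivAt lam (fderiv ℂ lam x₀) x₀ :=
    (hlam x₀ hx₀).differentiableAt.hasFDerivAt
  have hcomp : HasFDerivAt (fun x => g (x - lam x • a)) _ x₀ :=
    HasFDerivAt.comp x₀ (f := fun x => x - lam x • a) hgd.hasFDerivAt
      ((hasFDerivAt_id x₀).sub (hld.smul_const a))
  have hzero : HasFDerivAt (fun x => g (x - lam x • a))
      (0 : (L →L[ℂ] ℂ) →L[ℂ] ℂ) x₀ :=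
    (hasFDerivAt_const (0 : ℂ) x₀).congr_of_eventuallyEq <| by
      filter_upwards [hU.mem_nhds hx₀] with x hx using hroot x hx
  have hD : dg y = a (dg y) • dl := by
    refine (SeparatingDual.eq_iff_forall_dual_eq (R := ℂ)).2 fun v => ?_
    have hv := DFunLike.congr_fun (hcomp.unique hzero) v
    simp [hdg y v, hdg y a, hdl v] at hv
    rw [map_smul, smul_eq_mul]
    linear_combination hv
  have hyB : y (B dh dl) = 0 := by
    have hs := hsemi dh y
    rw [hroot x₀ hx₀, mul_zero, hD, map_smul, map_smul, smul_eq_mul] at hs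
    exact (mul_eq_zero.1 hs).resolve_left hnd
  have hskew : B dl dh = -B dh dl := by
    have hadd := hB.1 (dl + dh)
    simp only [map_add, LinearMap.add_apply, hB.1, zero_add, add_zero] at hadd
    exact eq_neg_of_add_eq_zero_right hadd
  have hyB' : x₀ (B dh dl) - lam x₀ * a (B dh dl) = 0 := by
    simpa [hy] using hyB
  rw [hskew, map_neg, map_neg]
  linear_combination -hyB'
end

section
/- Let 𝔤 be a finite-dimensional complex Lie algebra, let g ∈ S(𝔤) be a semi-invariant with weight χ ∈ 𝔤*, and let a ∈ 𝔤*. Let U ⊆ 𝔤* be open and let λ: U → ℂ be an analytic function satisfying g(x − λ(x)a) = 0 for all x ∈ U. Suppose the set of points x ∈ U at which ⟨a, dg(x − λ(x)a)⟩ ≠ 0 is dense in U. Then for every analytic function h on U and every x ∈ U one has {λ, h}(x) = λ(x)·{λ, h}_a(x). -/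
/-- Differentiating the identity `g (x - lam x • a) = 0` at a point where
`⟨a, dg⟩` does not vanish. -/
lemma fderiv_root_mul_eq {E : Type*} [NormedAddCommGroup E] [NormedSpace ℂ E]
    {g lam : E → ℂ} {a y : E} (hlam : DifferentiableAt ℂ lam y)
    (hroot : ∀ᶠ x in nhds y, g (x - lam x • a) = 0)
    (hne : fderiv ℂ g (y - lam y • a) a ≠ 0) (v : E) :
    fderiv ℂ lam y v * fderiv ℂ g (y - lam y • a) a = fderiv ℂ g (y - lam y • a) v := by
  have hg : DifferentiableAt ℂ g (y - lam y • a) := by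
    by_contra hg
    simp [fderiv_zero_of_not_differentiableAt hg] at hne
  have hinner := (hasFDerivAt_id (𝕜 := ℂ) y).sub (hlam.hasFDerivAt.smul_const a)
  have hcomp := hg.hasFDerivAt.comp y hinner
  have hzero : HasFDerivAt (fun x => g (x - lam x • a)) (0 : E →L[ℂ] ℂ) y :=
    (hasFDerivAt_const (0 : ℂ) y).congr_of_eventuallyEq hroot
  have hv := congrArg (fun T : E →L[ℂ] ℂ => T v) (hcomp.unique hzero)
  simp only [ContinuousLinearMap.comp_apply, sub_apply,
    ContinuousLinearMap.id_apply, ContinuousLinearMap.smulRight_apply, map_sub, map_smul,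
    smul_eq_mul, zero_apply] at hv
  exact (sub_eq_zero.mp hv).symm

/-- Lemma on roots of semi-invariants (Lemma 1 of the paper): if `λ : U → ℂ` is analytic
with `g(x − λ(x)a) = 0` on `U`, and the set of points of `U` where
`⟨a, dg(x − λ(x)a)⟩ ≠ 0` is dense in `U`, then for every analytic function `h` on `U`
and every `x ∈ U` one has `{λ, h}(x) = λ(x) · {λ, h}_a(x)`. -/
theorem root_of_semiInvariant_bracket_eq_of_dense
    {L : Type*} [NormedAddCommGroup L] [NormedSpace ℂ L] [FiniteDimensional ℂ L]
    (B : L →ₗ[ℂ] L →ₗ[ℂ] L) (hB : IsLieBracket L B)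
    (g : (L →L[ℂ] ℂ) → ℂ) (χ : L →L[ℂ] ℂ)
    (hpoly : IsPolyFun L g) (hg0 : g ≠ 0)
    (dg : (L →L[ℂ] ℂ) → L) (hdg : RepDeriv L g dg)
    (hsemi : ∀ (ξ : L) (x : L →L[ℂ] ℂ), x (B ξ (dg x)) = χ ξ * g x)
    (a : L →L[ℂ] ℂ)
    (U : Set (L →L[ℂ] ℂ)) (hU : IsOpen U)
    (lam : (L →L[ℂ] ℂ) → ℂ) (hlam : AnalyticOnNhd ℂ lam U)
    (hroot : ∀ x ∈ U, g (x - lam x • a) = 0)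
    (hdense : U ⊆ closure {x ∈ U | a (dg (x - lam x • a)) ≠ 0}) :
    ∀ h : (L →L[ℂ] ℂ) → ℂ, AnalyticOnNhd ℂ h U →
      ∀ x ∈ U, ∀ dl dh : L,
        (∀ v : L →L[ℂ] ℂ, fderiv ℂ lam x v = v dl) →
        (∀ v : L →L[ℂ] ℂ, fderiv ℂ h x v = v dh) →
        x (B dl dh) = lam x * a (B dl dh) := by
  intro h _ x hx dl dh hdl _
  set T : L →L[ℂ] L := (B dh).toContinuousLinearMap
  set F : (L →L[ℂ] ℂ) → ℂ := fun y => fderiv ℂ lam y ((y - lam y • a).comp T)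
  have hF : ContinuousOn F U := by
    have hlam' := hlam.continuousOn
    exact hlam.fderiv.continuousOn.clm_apply (by fun_prop)
  have hFzero : ∀ y ∈ {x ∈ U | a (dg (x - lam x • a)) ≠ 0}, F y = 0 := by
    rintro y ⟨hyU, hy⟩
    have hmul := fderiv_root_mul_eq (hlam y hyU).differentiableAt
      (Filter.eventually_of_mem (hU.mem_nhds hyU) hroot) (by rwa [hdg])
      ((y - lam y • a).comp T)
    rw [hdg, hdg, ContinuousLinearMap.comp_apply] at hmul
    have hz : (y - lam y • a) (T (dg (y - lam y • a))) = 0 :=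
      (hsemi dh _).trans (by rw [hroot y hyU, mul_zero])
    exact (mul_eq_zero.mp (hmul.trans hz)).resolve_right hy
  have hFx : F x = 0 :=
    Set.EqOn.of_subset_closure (g := fun _ => (0 : ℂ)) hFzero hF continuousOn_const
      (fun y hy => hy.1) hdense hx
  have hpair : x (B dh dl) = lam x * a (B dh dl) := sub_eq_zero.mp ((hdl _).symm.trans hFx)
  have hskew : B dl dh = -B dh dl := by
    have hsum := hB.1 (dl + dh)
    simp only [map_add, LinearMap.add_apply, hB.1, zero_add, add_zero] at hsum
    exact eq_neg_of_add_eq_zero_right hsum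
  rw [hskew, map_neg, map_neg, hpair, mul_neg]
end

section
/- Let g ∈ ℂ[x₁,…,xₙ] be a nonzero homogeneous polynomial with factorization g = c·h₁^{k₁}⋯h_p^{k_p}, where c ∈ ℂ* and h₁,…,h_p are pairwise non-associated irreducible polynomials, and set d = Σ_{j=1}^p deg h_j. Let a ∈ ℂⁿ be a point with g(a) ≠ 0. Then there exists a nonempty Zariski-open subset U ⊆ ℂⁿ such that for every x ∈ U the set {λ ∈ ℂ : g(x − λa) = 0} has exactly d elements. -/
/-- A subset of `ℂⁿ` is Zariski-open if its complement is the common zero locus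
of a family of polynomials. -/
def IsZariskiOpen {n : ℕ} (U : Set (Fin n → ℂ)) : Prop :=
  ∃ S : Set (MvPolynomial (Fin n) ℂ),
    Uᶜ = {x : Fin n → ℂ | ∀ p ∈ S, MvPolynomial.eval x p = 0}

namespace Polynomial

theorem coeff_prod_sum_of_natDegree_le {R ι : Type*} [CommSemiring R] (s : Finset ι)
    (f : ι → R[X]) (e : ι → ℕ) (hf : ∀ i ∈ s, (f i).natDegree ≤ e i) :
    (∏ i ∈ s, f i).coeff (∑ i ∈ s, e i) = ∏ i ∈ s, (f i).coeff (e i) := by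
  classical
  induction s using Finset.induction_on with
  | empty => simp
  | insert i s hi ih =>
    have hs : ∀ j ∈ s, (f j).natDegree ≤ e j := fun j hj => hf j (Finset.mem_insert_of_mem hj)
    rw [Finset.prod_insert hi, Finset.sum_insert hi, Finset.prod_insert hi,
      coeff_mul_add_eq_of_natDegree_le (hf i (Finset.mem_insert_self i s))
        ((natDegree_prod_le s f).trans (Finset.sum_le_sum hs)), ih hs]

/-- A polynomial separable over the fraction field of a domain satisfies a Bézout identity with
its derivative over the domain itself, up to a nonzero constant. -/
theorem exists_bezout_derivative_of_separable_map {R : Type*} (K : Type*) [CommRing R] [IsDomain R]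
    [Field K] [Algebra R K] [IsFractionRing R K] (F : R[X])
    (hF : (F.map (algebraMap R K)).Separable) :
    ∃ r : R, r ≠ 0 ∧ ∃ A B : R[X], A * F + B * derivative F = C r := by
  obtain ⟨A, B, hAB⟩ := hF
  obtain ⟨s, hs, hA⟩ := IsLocalization.integerNormalization_spec (nonZeroDivisors R) A
  obtain ⟨t, ht, hB⟩ := IsLocalization.integerNormalization_spec (nonZeroDivisors R) B
  rw [← IsScalarTower.algebraMap_smul K, smul_eq_C_mul] at hA hB
  refine ⟨s * t, mul_ne_zero (nonZeroDivisors.ne_zero hs) (nonZeroDivisors.ne_zero ht),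
    C t * IsLocalization.integerNormalization (nonZeroDivisors R) A,
    C s * IsLocalization.integerNormalization (nonZeroDivisors R) B, ?_⟩
  apply map_injective (algebraMap R K) (IsFractionRing.injective R K)
  simp only [Polynomial.map_add, Polynomial.map_mul, map_C, hA, hB, ← derivative_map, map_mul]
  linear_combination C (algebraMap R K s) * C (algebraMap R K t) * hAB

/-- Pairwise non-associated irreducible polynomials of positive degree over a normalized
gcd domain of characteristic zero have separable product over the fraction field. -/
theorem separable_map_prod_of_irreducible {R ι : Type*} (K : Type*) [Fintype ι] [CommRing R]
    [IsDomain R] [NormalizedGCDMonoid R] [Field K] [CharZero K] [Algebra R K] [IsFractionRing R K]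
    (F : ι → R[X]) (hirr : ∀ i, Irreducible (F i)) (hdeg : ∀ i, (F i).natDegree ≠ 0)
    (hdvd : ∀ i j, i ≠ j → ¬ F i ∣ F j) :
    ((∏ i, F i).map (algebraMap R K)).Separable := by
  have hprim i : (F i).IsPrimitive := (hirr i).isPrimitive (hdeg i)
  have hirrK i : Irreducible ((F i).map (algebraMap R K)) :=
    (hprim i).irreducible_iff_irreducible_map_fraction_map.mp (hirr i)
  rw [Polynomial.map_prod]
  refine separable_prod (fun i j hij => ?_) fun i => (hirrK i).separable
  refine (hirrK i).coprime_iff_not_dvd.mpr fun hd => hdvd i j hij ?_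
  exact ((hprim i).dvd_iff_fraction_map_dvd_fraction_map K).mpr hd

end Polynomial

namespace MvPolynomial

open Polynomial (CAlgHom)

theorem totalDegree_prod_pow_of_isDomain {R σ ι : Type*} [CommRing R] [IsDomain R]
    (s : Finset ι) (h : ι → MvPolynomial σ R) (k : ι → ℕ) (h0 : ∀ i, h i ≠ 0) :
    (∏ i ∈ s, h i ^ k i).totalDegree = ∑ i ∈ s, k i * (h i).totalDegree := by
  classical
  have hpow i (e : ℕ) : (h i ^ e).totalDegree = e * (h i).totalDegree := by
    induction e with
    | zero => simp
    | succ e ih =>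
      rw [pow_succ, totalDegree_mul_of_isDomain (pow_ne_zero _ (h0 i)) (h0 i), ih]
      ring
  induction s using Finset.induction_on with
  | empty => simp
  | insert i s hi ih =>
    rw [Finset.prod_insert hi, Finset.sum_insert hi, totalDegree_mul_of_isDomain
      (pow_ne_zero _ (h0 i)) (Finset.prod_ne_zero_iff.mpr fun j _ => pow_ne_zero _ (h0 j)),
      hpow, ih]

variable {R : Type*} [CommRing R] {n : ℕ}

/-- The restriction `λ ↦ h (x - λ a)` of a polynomial to a line. -/
noncomputable def restrictLine (x a : Fin n → R) : MvPolynomial (Fin n) R →ₐ[R] Polynomial R :=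
  aeval fun i => Polynomial.C (x i) - Polynomial.C (a i) * Polynomial.X

theorem eval_restrictLine (x a : Fin n → R) (h : MvPolynomial (Fin n) R) (t : R) :
    (restrictLine x a h).eval t = eval (x - t • a) h := by
  have : (Polynomial.aeval t).comp (restrictLine x a) = aeval (x - t • a) := by
    ext i
    simp [restrictLine, mul_comm t]
  simpa [Polynomial.coe_aeval_eq_eval, coe_aeval_eq_eval] using DFunLike.congr_fun this h

theorem natDegree_restrictLine_factor_le (u v : R) :
    (Polynomial.C u - Polynomial.C v * Polynomial.X).natDegree ≤ 1 := by
  compute_degree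

theorem natDegree_restrictLine_le (x a : Fin n → R) (h : MvPolynomial (Fin n) R) :
    (restrictLine x a h).natDegree ≤ h.totalDegree := by
  simpa [restrictLine] using
    aeval_natDegree_le h le_rfl _ fun i => natDegree_restrictLine_factor_le (x i) (a i)

theorem IsHomogeneous.coeff_restrictLine {g : MvPolynomial (Fin n) R} {m : ℕ}
    (hg : g.IsHomogeneous m) (x a : Fin n → R) :
    (restrictLine x a g).coeff m = (-1) ^ m * eval a g := by
  rw [restrictLine, aeval_def, eval₂_eq', eval_eq', Polynomial.finsetSum_coeff, Finset.mul_sum]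
  refine Finset.sum_congr rfl fun e he => ?_
  have hm : m = ∑ i, e i * 1 := by
    rw [← hg (mem_support_iff.mp he)]
    simp [Finsupp.weight_apply, Finsupp.sum_fintype]
  rw [← Polynomial.C_eq_algebraMap, Polynomial.coeff_C_mul, hm,
    Polynomial.coeff_prod_sum_of_natDegree_le _ _ _ fun i _ =>
      Polynomial.natDegree_pow_le_of_le _ (natDegree_restrictLine_factor_le _ _)]
  rw [mul_left_comm, ← Finset.prod_pow_eq_pow_sum, ← Finset.prod_mul_distrib]
  congr 1
  refine Finset.prod_congr rfl fun i _ => ?_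
  rw [Polynomial.coeff_pow_of_natDegree_le (natDegree_restrictLine_factor_le _ _)]
  simp [Polynomial.coeff_C, ← mul_pow]

/-- The substitution `x ↦ x + λ a` on polynomials in `x` and `λ`. -/
noncomputable def shiftHom (a : Fin n → R) :
    Polynomial (MvPolynomial (Fin n) R) →ₐ[R] Polynomial (MvPolynomial (Fin n) R) :=
  Polynomial.eval₂AlgHom
    (aeval fun i => Polynomial.C (X i) + Polynomial.C (C (a i)) * Polynomial.X)
    Polynomial.X fun _ => Commute.all _ _

theorem shiftHom_X (a : Fin n → R) : shiftHom a Polynomial.X = Polynomial.X :=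
  Polynomial.eval₂_X _ _

theorem shiftHom_C (a : Fin n → R) (h : MvPolynomial (Fin n) R) :
    shiftHom a (Polynomial.C h) =
      aeval (fun i => Polynomial.C (X i) + Polynomial.C (C (a i)) * Polynomial.X) h :=
  Polynomial.eval₂_C _ _

theorem shiftHom_C_C (a : Fin n → R) (r : R) :
    shiftHom a (Polynomial.C (C r)) = Polynomial.C (C r) :=
  (shiftHom a).commutes r

theorem shiftHom_C_X (a : Fin n → R) (i : Fin n) :
    shiftHom a (Polynomial.C (X i)) =
      Polynomial.C (X i) + Polynomial.C (C (a i)) * Polynomial.X := by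
  rw [shiftHom_C, aeval_X]

theorem shiftHom_comp_shiftHom_neg (a : Fin n → R) :
    (shiftHom a).comp (shiftHom (-a)) = AlgHom.id R _ := by
  refine Polynomial.algHom_ext' (MvPolynomial.algHom_ext fun i => ?_) ?_
  · simp only [AlgHom.comp_apply, Polynomial.CAlgHom_apply, AlgHom.id_apply, shiftHom_C_X,
      map_add, map_mul, shiftHom_C_C, shiftHom_X, Pi.neg_apply, map_neg]
    ring
  · simp only [AlgHom.comp_apply, shiftHom_X, AlgHom.id_apply]

/-- The substitution `x ↦ x - λ a` on polynomials in `x` and `λ`, as an automorphism. -/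
noncomputable def shiftEquiv (a : Fin n → R) :
    Polynomial (MvPolynomial (Fin n) R) ≃ₐ[R] Polynomial (MvPolynomial (Fin n) R) :=
  AlgEquiv.ofAlgHom (shiftHom (-a)) (shiftHom a)
    (by simpa using shiftHom_comp_shiftHom_neg (-a)) (shiftHom_comp_shiftHom_neg a)

theorem map_eval_shiftEquiv_C (x a : Fin n → R) (h : MvPolynomial (Fin n) R) :
    (shiftEquiv a (Polynomial.C h)).map (eval x) = restrictLine x a h := by
  have : ((Polynomial.mapAlgHom (aeval x)).comp (shiftHom (-a))).comp CAlgHom =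
      restrictLine x a := by
    refine MvPolynomial.algHom_ext fun i => ?_
    simp only [AlgHom.comp_apply, Polynomial.CAlgHom_apply, shiftHom_C_X, restrictLine, aeval_X]
    simp [sub_eq_add_neg]
  exact DFunLike.congr_fun this h

theorem prime_shiftEquiv_C [IsDomain R] (a : Fin n → R) {h : MvPolynomial (Fin n) R}
    (hh : Prime h) : Prime (shiftEquiv a (Polynomial.C h)) :=
  (MulEquiv.prime_iff (shiftEquiv a)).mpr (Polynomial.prime_C_iff.mpr hh)

theorem shiftEquiv_C_dvd_iff (a : Fin n → R) {f h : MvPolynomial (Fin n) R} :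
    shiftEquiv a (Polynomial.C f) ∣ shiftEquiv a (Polynomial.C h) ↔ f ∣ h := by
  rw [map_dvd_iff]
  refine ⟨fun hd => ?_, fun hd => map_dvd Polynomial.C hd⟩
  simpa using map_dvd (Polynomial.evalRingHom 0) hd

/-- The factors of a homogeneous polynomial not vanishing at `a` restrict to every line of
direction `a` with full degree. -/
theorem natDegree_restrictLine_eq [IsDomain R] {ι : Type*} [Fintype ι]
    {g : MvPolynomial (Fin n) R} {m : ℕ} (hg : g.IsHomogeneous m) {c : R} (hc : c ≠ 0)
    (h : ι → MvPolynomial (Fin n) R) (k : ι → ℕ) (hk : ∀ j, 0 < k j)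
    (hfact : g = C c * ∏ j, h j ^ k j) {a : Fin n → R} (ha : eval a g ≠ 0)
    (x : Fin n → R) (j : ι) :
    (restrictLine x a (h j)).natDegree = (h j).totalDegree := by
  have hg0 : g ≠ 0 := by rintro rfl; simp at ha
  have hcoeff : (restrictLine x a g).coeff m ≠ 0 := by
    simpa [hg.coeff_restrictLine] using ha
  have hlow : m ≤ (restrictLine x a g).natDegree := Polynomial.le_natDegree_of_ne_zero hcoeff
  have hne : restrictLine x a g ≠ 0 := by rintro h0; simp [h0] at hcoeff
  have hprod : restrictLine x a g = Polynomial.C c * ∏ j, restrictLine x a (h j) ^ k j := by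
    simp [hfact, restrictLine]
  have hLne i : restrictLine x a (h i) ≠ 0 := fun h0 => hne <| by
    rw [hprod, Finset.prod_eq_zero (Finset.mem_univ i) (by simp [h0, (hk i).ne']), mul_zero]
  have hhne i : h i ≠ 0 := fun h0 => hLne i (by simp [h0])
  have hm : m = ∑ i, k i * (h i).totalDegree := by
    rw [← hg.totalDegree hg0, hfact, totalDegree_mul_of_isDomain (by simpa using hc)
      (Finset.prod_ne_zero_iff.mpr fun i _ => pow_ne_zero _ (hhne i)), totalDegree_C, zero_add,
      totalDegree_prod_pow_of_isDomain _ _ _ hhne]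
  have hdeg : (restrictLine x a g).natDegree = ∑ i, k i * (restrictLine x a (h i)).natDegree := by
    rw [hprod, Polynomial.natDegree_C_mul hc,
      Polynomial.natDegree_prod _ _ fun i _ => pow_ne_zero _ (hLne i)]
    simp
  have hle : ∀ i ∈ Finset.univ,
      k i * (restrictLine x a (h i)).natDegree ≤ k i * (h i).totalDegree :=
    fun i _ => Nat.mul_le_mul_left _ (natDegree_restrictLine_le x a (h i))
  have heq := (Finset.sum_eq_sum_iff_of_le hle).mp
    ((Finset.sum_le_sum hle).antisymm (by rw [← hm, ← hdeg]; exact hlow)) j (Finset.mem_univ j)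
  exact Nat.eq_of_mul_eq_mul_left (hk j) heq

end MvPolynomial

/-- For a nonzero homogeneous `g = c · h₁^{k₁} ⋯ h_p^{k_p}` with the `hⱼ` irreducible and
pairwise non-associated, and a point `a` with `g(a) ≠ 0`, there is a nonempty Zariski-open
set `U` such that for every `x ∈ U` the equation `g(x − λa) = 0` has exactly
`d = Σ deg hⱼ` distinct roots `λ ∈ ℂ`. -/
theorem roots_of_shifted_homogeneous_polynomial
    {n : ℕ} (g : MvPolynomial (Fin n) ℂ) (hg0 : g ≠ 0)
    (m : ℕ) (hhom : g.IsHomogeneous m)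
    (c : ℂ) (hc : c ≠ 0)
    (p : ℕ) (h : Fin p → MvPolynomial (Fin n) ℂ)
    (k : Fin p → ℕ) (hk : ∀ j, 0 < k j)
    (hirr : ∀ j, Irreducible (h j))
    (hassoc : ∀ i j, i ≠ j → ¬ Associated (h i) (h j))
    (hfact : g = MvPolynomial.C c * ∏ j, h j ^ k j)
    (d : ℕ) (hd : d = ∑ j, (h j).totalDegree)
    (a : Fin n → ℂ) (ha : MvPolynomial.eval a g ≠ 0) :
    ∃ U : Set (Fin n → ℂ), IsZariskiOpen U ∧ U.Nonempty ∧
      ∀ x ∈ U,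
        {lam : ℂ | MvPolynomial.eval (x - lam • a) g = 0}.Finite ∧
        {lam : ℂ | MvPolynomial.eval (x - lam • a) g = 0}.ncard = d := by
  classical
  have hdeg x j := MvPolynomial.natDegree_restrictLine_eq hhom hc h k hk hfact ha x j
  have hpos j : (h j).totalDegree ≠ 0 := fun h0 => (hirr j).not_isUnit <| by
    rw [MvPolynomial.totalDegree_eq_zero_iff_eq_C] at h0
    have hne := (hirr j).ne_zero
    rw [h0] at hne ⊢
    exact (isUnit_iff_ne_zero.mpr fun hz => hne (by rw [hz, map_zero])).map MvPolynomial.C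
  let F : Fin p → Polynomial (MvPolynomial (Fin n) ℂ) :=
    fun j => MvPolynomial.shiftEquiv a (Polynomial.C (h j))
  have hFmap x j : (F j).map (MvPolynomial.eval x) = MvPolynomial.restrictLine x a (h j) :=
    MvPolynomial.map_eval_shiftEquiv_C x a (h j)
  have hFdeg j : (F j).natDegree ≠ 0 := fun h0 => hpos j <| by
    rw [← hdeg 0 j, ← hFmap]
    exact Nat.eq_zero_of_le_zero (Polynomial.natDegree_map_le.trans h0.le)
  have hsep : ((∏ j, F j).map (algebraMap (MvPolynomial (Fin n) ℂ)
      (FractionRing (MvPolynomial (Fin n) ℂ)))).Separable := by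
    let _ : NormalizedGCDMonoid (MvPolynomial (Fin n) ℂ) :=
      Classical.choice inferInstance
    refine Polynomial.separable_map_prod_of_irreducible _ F
      (fun j => (MvPolynomial.prime_shiftEquiv_C a (hirr j).prime).irreducible) hFdeg
      fun i j hij hdvd => hassoc i j hij ?_
    exact (hirr i).associated_of_dvd (hirr j) ((MvPolynomial.shiftEquiv_C_dvd_iff a).mp hdvd)
  obtain ⟨r, hr, A, B, hAB⟩ := Polynomial.exists_bezout_derivative_of_separable_map _ _ hsep
  refine ⟨{x | MvPolynomial.eval x r ≠ 0}, ⟨{r}, by ext x; simp⟩, ?_, fun x hx => ?_⟩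
  · by_contra hempty
    refine hr (MvPolynomial.funext fun x => ?_)
    by_contra hx
    exact hempty ⟨x, by simpa using hx⟩
  set G : Polynomial ℂ := ∏ j, MvPolynomial.restrictLine x a (h j) with hG
  have hFG : (∏ j, F j).map (MvPolynomial.eval x) = G := by
    simp only [Polynomial.map_prod, hFmap, hG]
  have hGsep : G.Separable := by
    have hmap := congrArg (Polynomial.map (MvPolynomial.eval x)) hAB
    rw [Polynomial.map_add, Polynomial.map_mul, Polynomial.map_mul, ← Polynomial.derivative_map,
      hFG, Polynomial.map_C] at hmap
    have hunit : Polynomial.C (MvPolynomial.eval x r)⁻¹ *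
        Polynomial.C (MvPolynomial.eval x r) = 1 := by
      rw [← Polynomial.C_mul, inv_mul_cancel₀ hx, Polynomial.C_1]
    refine ⟨Polynomial.C (MvPolynomial.eval x r)⁻¹ * A.map (MvPolynomial.eval x),
      Polynomial.C (MvPolynomial.eval x r)⁻¹ * B.map (MvPolynomial.eval x), ?_⟩
    linear_combination Polynomial.C (MvPolynomial.eval x r)⁻¹ * hmap + hunit
  have hLne j : MvPolynomial.restrictLine x a (h j) ≠ 0 := fun h0 => hpos j <| by
    rw [← hdeg x j, h0, Polynomial.natDegree_zero]
  have hGdeg : G.natDegree = d := by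
    rw [hG, Polynomial.natDegree_prod _ _ fun j _ => hLne j, hd]
    exact Finset.sum_congr rfl fun j _ => hdeg x j
  have hset : {lam : ℂ | MvPolynomial.eval (x - lam • a) g = 0} = ↑G.roots.toFinset := by
    ext t
    rw [Finset.mem_coe, Multiset.mem_toFinset, Polynomial.mem_roots hGsep.ne_zero,
      Polynomial.IsRoot, hG, Polynomial.eval_prod]
    simp [hfact, hc, Finset.prod_eq_zero_iff, MvPolynomial.eval_restrictLine, (hk _).ne']
  rw [hset]
  refine ⟨Finset.finite_toSet _, ?_⟩
  rw [Set.ncard_coe_finset, Multiset.toFinset_card_of_nodup (Polynomial.nodup_roots hGsep),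
    IsAlgClosed.card_roots_eq_natDegree, hGdeg]
end

section
/- Let g ∈ ℂ[x₁,…,xₙ] be a homogeneous polynomial of degree m and a ∈ ℂⁿ a point with g(a) ≠ 0. Let U ⊆ ℂⁿ be an open subset (in the Euclidean topology), let λ₁,…,λ_d : U → ℂ be analytic functions that are pairwise distinct at every point of U, and let s₁,…,s_d be positive integers with s₁+⋯+s_d = m, such that g(x − λa) = g(a)·∏_{i=1}^d (λᵢ(x) − λ)^{sᵢ} for all x ∈ U and all λ ∈ ℂ. Define polynomials g₀,…,g_m ∈ ℂ[x₁,…,xₙ] by g(a + λx) = Σ_{j=0}^m g_j(x)λʲ. Then for every x ∈ U the ℂ-linear span of the gradients {∇λ₁(x),…,∇λ_d(x)} equals the ℂ-linear span of the gradients {∇g₁(x),…,∇g_m(x)} in ℂⁿ. -/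
open Polynomial in
/-- The polynomial `s i * (1 + l i X)^(s i - 1) * ∏_{k ≠ i} (1 + l k X)^(s k)`,
written with the common factor `∏ₖ (1 + l k X)^(s k - 1)` pulled out. -/
noncomputable def cofactorPoly {d : ℕ} (l : Fin d → ℂ) (s : Fin d → ℕ) (i : Fin d) : ℂ[X] :=
  C (s i : ℂ) * ((∏ k, (1 + C (l k) * X) ^ (s k - 1)) *
    ∏ k ∈ Finset.univ.erase i, (1 + C (l k) * X))

/-- A homogeneous polynomial of degree `m` scales by `c ^ m` under `x ↦ c • x`. -/
theorem MvPolynomial.IsHomogeneous.eval_smul_eq {σ R : Type*} [CommSemiring R]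
    {p : MvPolynomial σ R} {m : ℕ} (hp : p.IsHomogeneous m) (c : R) (x : σ → R) :
    eval (c • x) p = c ^ m * eval x p := by
  rw [eval_eq, eval_eq, Finset.mul_sum]
  refine Finset.sum_congr rfl fun e he => ?_
  have hdeg : ∑ i ∈ e.support, e i = m := by
    rw [← hp.degree_eq_sum_deg_support he]
  simp only [Pi.smul_apply, smul_eq_mul, mul_pow, Finset.prod_mul_distrib,
    Finset.prod_pow_eq_pow_sum, hdeg]
  ring

/-- The line derivative of a polynomial function along a coordinate axis is the evaluation of
its formal partial derivative. -/
theorem MvPolynomial.hasLineDerivAt_eval {𝕜 σ : Type*} [NontriviallyNormedField 𝕜] [DecidableEq σ]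
    (p : MvPolynomial σ 𝕜) (x : σ → 𝕜) (r : σ) :
    HasLineDerivAt 𝕜 (fun y => eval y p) (eval x (pderiv r p)) x (Pi.single r 1) := by
  induction p using MvPolynomial.induction_on with
  | C c => simpa [HasLineDerivAt] using hasDerivAt_const (0 : 𝕜) c
  | add p q hp hq =>
    simp only [HasLineDerivAt, map_add] at hp hq ⊢
    exact hp.add hq
  | mul_X p i hp =>
    simp only [HasLineDerivAt] at hp ⊢
    have hX : HasDerivAt (fun t : 𝕜 => x i + t * (Pi.single r 1 : σ → 𝕜) i)
        ((Pi.single r 1 : σ → 𝕜) i) 0 := by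
      simpa using ((hasDerivAt_id (0 : 𝕜)).mul_const _).const_add (x i)
    have h := hp.mul hX
    simp only [Derivation.leibniz, pderiv_X, map_add, map_mul, smul_eq_mul, eval_X] at h ⊢
    convert! h using 1
    rcases eq_or_ne i r with rfl | hir
    · simp; ring
    · simp [hir]; ring

/-- If the vectors `w j` are combinations of the `u i` with a coefficient matrix whose rows are
linearly independent, then both families have the same span. -/
theorem span_range_eq_of_linearIndependent_rows {K V ι κ : Type*} [Field K] [AddCommGroup V]
    [Module K V] [Fintype ι] [Fintype κ] (M : ι → κ → K) (hM : LinearIndependent K M)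
    (u : ι → V) (w : κ → V) (hw : ∀ j, w j = ∑ i, M i j • u i) :
    Submodule.span K (Set.range u) = Submodule.span K (Set.range w) := by
  classical
  apply le_antisymm <;> rw [Submodule.span_le] <;> rintro _ ⟨k, rfl⟩
  · obtain ⟨L, hL⟩ := LinearMap.exists_leftInverse_of_injective
      (Fintype.linearCombination K M) (LinearMap.ker_eq_bot.2
        (hM.fintypeLinearCombination_injective))
    have hLM : ∀ i, L (M i) = Pi.single i 1 := fun i => by
      simpa using LinearMap.congr_fun hL (Pi.single i 1)
    have hcomb : u k = ∑ j, L (Pi.single j 1) k • w j := by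
      have hrow : ∀ i, ∑ j, L (Pi.single j 1) k * M i j = (Pi.single i 1 : ι → K) k := fun i => by
        rw [← hLM i]
        conv_rhs => rw [pi_eq_sum_univ' (M i)]
        simp [map_sum, Finset.sum_apply, mul_comm]
      simp_rw [hw, Finset.smul_sum, smul_smul]
      rw [Finset.sum_comm]
      simp_rw [← Finset.sum_smul, hrow]
      simp [Pi.single_apply]
    rw [hcomb]
    exact Submodule.sum_mem _ fun j _ =>
      Submodule.smul_mem _ _ (Submodule.subset_span (Set.mem_range_self j))
  · rw [hw]
    exact Submodule.sum_mem _ fun i _ =>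
      Submodule.smul_mem _ _ (Submodule.subset_span (Set.mem_range_self i))

open Polynomial in
theorem natDegree_cofactorPoly_lt {d : ℕ} (l : Fin d → ℂ) {s : Fin d → ℕ} (hs : ∀ i, 0 < s i)
    (i : Fin d) : (cofactorPoly l s i).natDegree < ∑ k, s k := by
  have hlin : ∀ k, (1 + C (l k) * X : ℂ[X]).natDegree ≤ 1 := fun k => by compute_degree
  have h₁ : (∏ k, (1 + C (l k) * X : ℂ[X]) ^ (s k - 1)).natDegree ≤ ∑ k, (s k - 1) :=
    (natDegree_prod_le _ _).trans <| Finset.sum_le_sum fun k _ => by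
      simpa using natDegree_pow_le_of_le (s k - 1) (hlin k)
  have h₂ : (∏ k ∈ Finset.univ.erase i, (1 + C (l k) * X : ℂ[X])).natDegree ≤ d - 1 := by
    refine (natDegree_prod_le _ _).trans ((Finset.sum_le_sum fun k _ => hlin k).trans ?_)
    simp
  have h₃ : ∑ k, s k = ∑ k, (s k - 1) + d := by
    calc ∑ k, s k = ∑ k, ((s k - 1) + 1) :=
          Finset.sum_congr rfl fun k _ => (Nat.sub_add_cancel (hs k)).symm
      _ = _ := by simp [Finset.sum_add_distrib]
  have h₄ := (natDegree_C_mul_le (s i : ℂ) _).trans (natDegree_mul_le_of_le h₁ h₂)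
  have := i.pos
  unfold cofactorPoly
  omega

open Polynomial in
/-- For pairwise distinct `l k`, the products `∏_{k ≠ i} (1 + l k X)` are linearly independent. -/
theorem linearIndependent_prod_erase {d : ℕ} (l : Fin d → ℂ) (hl : Function.Injective l) :
    LinearIndependent ℂ fun i => ∏ k ∈ Finset.univ.erase i, (1 + C (l k) * X : ℂ[X]) := by
  rw [Fintype.linearIndependent_iff]
  intro c hc
  have heval : ∀ t : ℂ, ∑ i, c i * ∏ k ∈ Finset.univ.erase i, (1 + l k * t) = 0 := fun t => by
    simpa [eval_finsetSum, eval_prod] using congrArg (eval t) hc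
  have hne : ∀ i, l i ≠ 0 → c i = 0 := fun i hi => by
    have h := heval (-(l i)⁻¹)
    rw [Finset.sum_eq_single i] at h
    · refine (mul_eq_zero.1 h).resolve_right (Finset.prod_ne_zero_iff.2 fun k hk h0 => ?_)
      refine Finset.ne_of_mem_erase hk (hl ?_)
      field_simp at h0
      linear_combination -h0
    · intro j _ hj
      rw [Finset.prod_eq_zero (Finset.mem_erase.2 ⟨hj.symm, Finset.mem_univ i⟩), mul_zero]
      field_simp
      ring
    · simp
  intro i
  by_cases hi : l i = 0
  · have h := heval 0
    rw [Finset.sum_eq_single i] at h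
    · simpa using h
    · intro j _ hj
      rw [hne j fun h0 => hj (hl (h0.trans hi.symm)), zero_mul]
    · simp
  · exact hne i hi

open Polynomial in
theorem linearIndependent_cofactorPoly {d : ℕ} {l : Fin d → ℂ} (hl : Function.Injective l)
    {s : Fin d → ℕ} (hs : ∀ i, 0 < s i) : LinearIndependent ℂ (cofactorPoly l s) := by
  have hQ : (∏ k, (1 + C (l k) * X : ℂ[X]) ^ (s k - 1)) ≠ 0 := by
    refine Finset.prod_ne_zero_iff.2 fun k _ => pow_ne_zero _ fun h => ?_
    simpa using congrArg (eval 0) h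
  rw [Fintype.linearIndependent_iff]
  intro c hc i
  have h : ∑ i, (c i * s i) • ∏ k ∈ Finset.univ.erase i, (1 + C (l k) * X : ℂ[X]) = 0 := by
    refine (mul_eq_zero.1 (?_ : (∏ k, (1 + C (l k) * X : ℂ[X]) ^ (s k - 1)) * _ = 0)).resolve_left hQ
    rw [← hc, Finset.mul_sum]
    refine Finset.sum_congr rfl fun i _ => ?_
    simp only [cofactorPoly, smul_eq_C_mul, C_mul]
    ring
  have hci := Fintype.linearIndependent_iff.1 (linearIndependent_prod_erase l hl) _ h i
  exact (mul_eq_zero.1 hci).resolve_right (Nat.cast_ne_zero.2 (hs i).ne')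

/-- The coefficient vectors of a linearly independent family of polynomials of degree `< m` are
linearly independent. -/
theorem LinearIndependent.coeff_of_natDegree_lt {K ι : Type*} [Field K] [Fintype ι] {m : ℕ}
    {P : ι → Polynomial K} (hP : LinearIndependent K P) (hdeg : ∀ i, (P i).natDegree < m) :
    LinearIndependent K fun i (j : Fin m) => (P i).coeff j := by
  rw [Fintype.linearIndependent_iff] at hP ⊢
  intro c hc
  refine hP c (Polynomial.ext fun j => ?_)
  simp only [Polynomial.finsetSum_coeff, Polynomial.coeff_smul, Polynomial.coeff_zero]
  by_cases hj : j < m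
  · simpa using congrFun hc ⟨j, hj⟩
  · exact Finset.sum_eq_zero fun i _ => by
      rw [Polynomial.coeff_eq_zero_of_natDegree_lt ((hdeg i).trans_le (not_lt.1 hj)), smul_zero]

/-- If `g (x - t a) = g(a) ∏ (l i - t)^(s i)` for all `t`, then
`g (a + t x) = g(a) ∏ (1 + l i t)^(s i)` for all `t`. -/
theorem MvPolynomial.IsHomogeneous.eval_add_smul_eq_prod {σ : Type*} {g : MvPolynomial σ ℂ}
    {d : ℕ} {s : Fin d → ℕ} (hg : g.IsHomogeneous (∑ i, s i)) {a x : σ → ℂ} {l : Fin d → ℂ}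
    (h : ∀ t : ℂ, eval (x - t • a) g = eval a g * ∏ i, (l i - t) ^ s i) (t : ℂ) :
    eval (a + t • x) g = eval a g * ∏ i, (1 + l i * t) ^ s i := by
  rcases eq_or_ne t 0 with rfl | ht
  · simp
  · have hx : a + t • x = t • (x - (-t⁻¹) • a) := by
      ext r
      simp
      field_simp
      ring
    rw [hx, hg.eval_smul_eq, h, ← Finset.prod_pow_eq_pow_sum, mul_left_comm,
      ← Finset.prod_mul_distrib]
    congr 1
    refine Finset.prod_congr rfl fun i _ => ?_
    rw [← mul_pow]
    congr 1
    field_simp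
    ring

open Polynomial in
theorem hasLineDerivAt_prod_one_add_mul {E : Type*} [NormedAddCommGroup E] [NormedSpace ℂ E]
    {d : ℕ} {f : Fin d → E → ℂ} {x : E} (hf : ∀ i, DifferentiableAt ℂ (f i) x) (s : Fin d → ℕ)
    (hs : ∀ i, 0 < s i) (v : E) (t : ℂ) :
    HasLineDerivAt ℂ (fun y => ∏ i, (1 + f i y * t) ^ s i)
      (∑ i, fderiv ℂ (f i) x v * (t * (cofactorPoly (fun k => f k x) s i).eval t)) x v := by
  have h : ∀ i ∈ Finset.univ, HasDerivAt (fun z : ℂ => (1 + f i (x + z • v) * t) ^ s i)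
      (s i * (1 + f i x * t) ^ (s i - 1) * (fderiv ℂ (f i) x v * t)) 0 := fun i _ => by
    have hi : HasDerivAt (fun z : ℂ => f i (x + z • v)) (fderiv ℂ (f i) x v) 0 :=
      (hf i).hasFDerivAt.hasLineDerivAt v
    simpa using ((hi.mul_const t).const_add 1).fun_pow (s i)
  unfold HasLineDerivAt
  convert! HasDerivAt.fun_finsetProd h using 1
  refine Finset.sum_congr rfl fun i hi => ?_
  have hsplit : ∏ k ∈ Finset.univ.erase i, (1 + f k x * t) ^ s k =
      (∏ k ∈ Finset.univ.erase i, (1 + f k x * t) ^ (s k - 1)) *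
        ∏ k ∈ Finset.univ.erase i, (1 + f k x * t) := by
    rw [← Finset.prod_mul_distrib]
    exact Finset.prod_congr rfl fun k _ => (pow_sub_one_mul (hs k).ne' _).symm
  simp only [cofactorPoly, eval_mul, eval_prod, eval_pow, eval_add, eval_one, eval_C, eval_X,
    zero_smul, add_zero, smul_eq_mul, hsplit]
  rw [← Finset.mul_prod_erase _ _ hi]
  ring

/-- Proposition: if on an open set `U` the roots `λ₁(x),…,λ_d(x)` of `g(x − λa) = 0` are
analytic, pairwise distinct, and `g(x − λa) = g(a)·∏ (λᵢ(x) − λ)^{sᵢ}`, and the polynomials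
`g₀,…,g_m` are defined by the expansion `g(a + λx) = Σ gⱼ(x) λʲ`, then for every `x ∈ U`
the span of the gradients `∇λᵢ(x)` equals the span of the gradients `∇g₁(x),…,∇g_m(x)`. -/
theorem span_grad_roots_eq_span_grad_coeffs
    {n : ℕ} (g : MvPolynomial (Fin n) ℂ)
    (m : ℕ) (hhom : g.IsHomogeneous m)
    (a : Fin n → ℂ) (ha : MvPolynomial.eval a g ≠ 0)
    (U : Set (Fin n → ℂ)) (hU : IsOpen U)
    (d : ℕ) (lam : Fin d → (Fin n → ℂ) → ℂ)
    (hlam : ∀ i, AnalyticOnNhd ℂ (lam i) U)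
    (hdist : ∀ x ∈ U, ∀ i j : Fin d, i ≠ j → lam i x ≠ lam j x)
    (s : Fin d → ℕ) (hs : ∀ i, 0 < s i) (hsum : ∑ i, s i = m)
    (hfact : ∀ x ∈ U, ∀ t : ℂ,
      MvPolynomial.eval (x - t • a) g =
        MvPolynomial.eval a g * ∏ i, (lam i x - t) ^ s i)
    (gc : ℕ → MvPolynomial (Fin n) ℂ)
    (hgc : ∀ (x : Fin n → ℂ) (t : ℂ),
      MvPolynomial.eval (a + t • x) g =
        ∑ j ∈ Finset.range (m + 1), MvPolynomial.eval x (gc j) * t ^ j) :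
    ∀ x ∈ U,
      Submodule.span ℂ
          (Set.range fun i : Fin d =>
            (fun r : Fin n => fderiv ℂ (lam i) x (Pi.single r 1))) =
        Submodule.span ℂ
          (Set.range fun j : Fin m =>
            (fun r : Fin n => MvPolynomial.eval x (MvPolynomial.pderiv r (gc ((j : ℕ) + 1))))) := by
  intro x hx
  subst hsum
  have hinj : Function.Injective fun k => lam k x := fun i j hij =>
    by_contra fun hne => hdist x hx i j hne hij
  have hderiv : ∀ (r : Fin n) (t : ℂ),
      ∑ j ∈ Finset.range (∑ i, s i + 1), MvPolynomial.eval x (MvPolynomial.pderiv r (gc j)) * t ^ j =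
        MvPolynomial.eval a g * ∑ i, fderiv ℂ (lam i) x (Pi.single r 1) *
          (t * (cofactorPoly (fun k => lam k x) s i).eval t) := fun r t => by
    have hleft : HasLineDerivAt ℂ (fun y => MvPolynomial.eval (a + t • y) g)
        (∑ j ∈ Finset.range (∑ i, s i + 1),
          MvPolynomial.eval x (MvPolynomial.pderiv r (gc j)) * t ^ j) x (Pi.single r 1) := by
      simp only [hgc]
      exact HasDerivAt.fun_sum fun j _ =>
        HasDerivAt.mul_const ((gc j).hasLineDerivAt_eval x r) (t ^ j)
    have hright := HasDerivAt.const_mul (MvPolynomial.eval a g)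
      (hasLineDerivAt_prod_one_add_mul (fun i => (hlam i x hx).differentiableAt) s hs
        (Pi.single r 1) t)
    have hright' : HasLineDerivAt ℂ
        (fun y => MvPolynomial.eval a g * ∏ i, (1 + lam i y * t) ^ s i) _ x (Pi.single r 1) :=
      hright
    refine hleft.unique (hright'.congr_of_eventuallyEq ?_)
    filter_upwards [hU.mem_nhds hx] with y hy
    exact hhom.eval_add_smul_eq_prod (hfact y hy) t
  refine span_range_eq_of_linearIndependent_rows
    (fun i (j : Fin (∑ i, s i)) =>
      (MvPolynomial.eval a g • cofactorPoly (fun k => lam k x) s i).coeff j)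
    (LinearIndependent.coeff_of_natDegree_lt
      ((linearIndependent_cofactorPoly hinj hs).units_smul fun _ => Units.mk0 _ ha)
      fun i => (Polynomial.natDegree_smul_le _ _).trans_lt (natDegree_cofactorPoly_lt _ hs i))
    _ _ fun j => ?_
  ext r
  have hpoly : ∑ j ∈ Finset.range (∑ i, s i + 1),
      Polynomial.C (MvPolynomial.eval x (MvPolynomial.pderiv r (gc j))) * Polynomial.X ^ j =
      Polynomial.X * ∑ i, Polynomial.C (fderiv ℂ (lam i) x (Pi.single r 1)) *
        (MvPolynomial.eval a g • cofactorPoly (fun k => lam k x) s i) := by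
    refine Polynomial.funext fun t => ?_
    simp only [Polynomial.eval_finsetSum, Polynomial.eval_mul, Polynomial.eval_C,
      Polynomial.eval_pow, Polynomial.eval_X, Polynomial.eval_smul, hderiv, Finset.mul_sum,
      smul_eq_mul]
    exact Finset.sum_congr rfl fun i _ => by ring
  have hcoeff := congrArg (fun p => Polynomial.coeff p (j + 1)) hpoly
  simp only [Polynomial.coeff_X_mul, Polynomial.finsetSum_coeff, Polynomial.coeff_C_mul,
    Polynomial.coeff_X_pow] at hcoeff
  simpa [mul_comm, mul_left_comm, mul_assoc] using hcoeff
end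

section
/- Let f, f₁,…,f_k ∈ ℂ[x₁,…,xₙ]. Suppose there exists a nonempty Zariski-open subset U ⊆ ℂⁿ such that for every x ∈ U the gradient ∇f(x) lies in the ℂ-linear span of ∇f₁(x),…,∇f_k(x). Then f is algebraic over the subfield ℂ(f₁,…,f_k) of the field of rational functions ℂ(x₁,…,xₙ). -/
open Polynomial TensorProduct KaehlerDifferential in
/-- In characteristic zero, the differential of a transcendental element is nonzero. -/
theorem Transcendental.kaehlerDifferential_D_ne_zero {K L : Type*} [Field K] [CharZero K]
    [Field L] [Algebra K L] {f : L} (hf : Transcendental K f) : D K L f ≠ 0 := by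
  let : Algebra K[X] L := (Polynomial.aeval (R := K) f).toRingHom.toAlgebra
  have hmap (p : K[X]) : algebraMap K[X] L p = Polynomial.aeval f p := rfl
  have : IsScalarTower K K[X] L := .of_algebraMap_eq fun x ↦ by simp [hmap]
  have : FaithfulSMul K[X] L :=
    (faithfulSMul_iff_algebraMap_injective _ _).2 (transcendental_iff_injective.1 hf)
  let : Algebra (FractionRing K[X]) L := FractionRing.liftAlgebra K[X] L
  have : CharZero (FractionRing K[X]) :=
    charZero_of_injective_algebraMap (algebraMap K _).injective
  obtain ⟨ι, v, hv⟩ := exists_isTranscendenceBasis' (FractionRing K[X]) L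
  have := hv.isAlgebraic_field
  have : Algebra.FormallySmooth (FractionRing K[X]) L :=
    .of_algebraicIndependent_of_isSeparable hv.1
  have : Algebra.FormallySmooth K[X] (FractionRing K[X]) :=
    .of_isLocalization (nonZeroDivisors K[X])
  have : Algebra.FormallySmooth K[X] L := .comp K[X] (FractionRing K[X]) L
  have hinj : Function.Injective (mapBaseChange K K[X] L) := by
    rw [injective_iff_map_eq_zero]
    intro x hx
    obtain ⟨y, rfl⟩ := (Algebra.H1Cotangent.exact_δ_mapBaseChange K K[X] L x).mp hx
    rw [Subsingleton.elim y 0, map_zero]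
  intro h
  have hX : (1 : L) ⊗ₜ[K[X]] D K K[X] X = 0 := hinj (by simp [hmap, h])
  have hone := congrArg (AlgebraTensorModule.rid K[X] L L)
    (congrArg (AlgebraTensorModule.lTensor L L (polynomialEquiv K).toLinearMap) hX)
  simp at hone

/-- In characteristic zero, some `K`-derivation of `L` does not kill a given transcendental
element. -/
theorem Transcendental.exists_derivation_ne_zero {K L : Type*} [Field K] [CharZero K]
    [Field L] [Algebra K L] {f : L} (hf : Transcendental K f) :
    ∃ d : Derivation K L L, d f ≠ 0 := by
  have h := hf.kaehlerDifferential_D_ne_zero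
  rw [ne_eq, ← Module.forall_dual_apply_eq_zero_iff L, not_forall] at h
  obtain ⟨φ, hφ⟩ := h
  exact ⟨φ.compDer (KaehlerDifferential.D K L), hφ⟩

/-- The chain rule for a derivation on an algebra over a polynomial ring. -/
theorem Derivation.algebraMap_mvPolynomial_eq_sum {σ R A : Type*} [Fintype σ] [CommRing R]
    [CommRing A] [Algebra R A] [Algebra (MvPolynomial σ R) A]
    [IsScalarTower R (MvPolynomial σ R) A] (d : Derivation R A A) (p : MvPolynomial σ R) :
    d (algebraMap _ A p) =
      ∑ r, algebraMap (MvPolynomial σ R) A (MvPolynomial.pderiv r p) *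
        d (algebraMap (MvPolynomial σ R) A (MvPolynomial.X r)) := by
  classical
  induction p using MvPolynomial.induction_on with
  | C a =>
    rw [← MvPolynomial.algebraMap_eq, ← IsScalarTower.algebraMap_apply, d.map_algebraMap]
    simp
  | add p q hp hq => simp [hp, hq, add_mul, Finset.sum_add_distrib]
  | mul_X p i hp =>
    simp [hp, add_mul, Finset.sum_add_distrib, Finset.mul_sum, Pi.single_apply, mul_assoc,
      apply_ite (algebraMap (MvPolynomial σ R) A)]

/-- A polynomial vanishing on a nonempty Zariski-open set is zero. -/
theorem IsZariskiOpen.eq_zero_of_eval_eq_zero {n : ℕ} {U : Set (Fin n → ℂ)}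
    (hU : IsZariskiOpen U) (hne : U.Nonempty) {g : MvPolynomial (Fin n) ℂ}
    (hg : ∀ x ∈ U, MvPolynomial.eval x g = 0) : g = 0 := by
  obtain ⟨S, hS⟩ := hU
  obtain ⟨y, hy⟩ := hne
  have hy' : y ∉ Uᶜ := fun h ↦ h hy
  rw [hS] at hy'
  simp only [Set.mem_ofPred_eq, not_forall] at hy'
  obtain ⟨p, hpS, hp⟩ := hy'
  have hgp : g * p = 0 := by
    refine MvPolynomial.funext fun x ↦ ?_
    rw [map_mul, map_zero]
    by_cases hx : x ∈ U
    · rw [hg x hx, zero_mul]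
    · have hx' : x ∈ Uᶜ := hx
      rw [hS] at hx'
      rw [hx' p hpS, mul_zero]
  exact (mul_eq_zero.1 hgp).resolve_right fun h ↦ hp (by rw [h, map_zero])

/-- If on a nonempty Zariski-open set the gradient of `f` lies in the span of the gradients of
the `fs i`, then a derivation of the fraction field that kills all `fs i` kills `f`. -/
theorem Derivation.eq_zero_of_gradient_in_span {n k : ℕ} {L : Type*} [Field L] [Algebra ℂ L]
    [Algebra (MvPolynomial (Fin n) ℂ) L] [IsScalarTower ℂ (MvPolynomial (Fin n) ℂ) L]
    [IsFractionRing (MvPolynomial (Fin n) ℂ) L] (d : Derivation ℂ L L)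
    (f : MvPolynomial (Fin n) ℂ) (fs : Fin k → MvPolynomial (Fin n) ℂ)
    {U : Set (Fin n → ℂ)} (hU : IsZariskiOpen U) (hne : U.Nonempty)
    (hgrad : ∀ x ∈ U,
      (fun r : Fin n => MvPolynomial.eval x (MvPolynomial.pderiv r f)) ∈
        Submodule.span ℂ (Set.range fun i : Fin k =>
          (fun r : Fin n => MvPolynomial.eval x (MvPolynomial.pderiv r (fs i)))))
    (hfs : ∀ i, d (algebraMap _ L (fs i)) = 0) : d (algebraMap _ L f) = 0 := by
  obtain ⟨b, hb⟩ := IsLocalization.exist_integer_multiples_of_finite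
    (nonZeroDivisors (MvPolynomial (Fin n) ℂ))
    fun r : Fin n ↦ d (algebraMap (MvPolynomial (Fin n) ℂ) L (MvPolynomial.X r))
  choose v hv using hb
  have hsum (p : MvPolynomial (Fin n) ℂ) : algebraMap _ L (∑ r, MvPolynomial.pderiv r p * v r) =
      algebraMap (MvPolynomial (Fin n) ℂ) L b * d (algebraMap (MvPolynomial (Fin n) ℂ) L p) := by
    rw [d.algebraMap_mvPolynomial_eq_sum, map_sum, Finset.mul_sum]
    refine Finset.sum_congr rfl fun r _ ↦ ?_
    rw [map_mul, hv, Algebra.smul_def]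
    ring
  have hinj : Function.Injective (algebraMap (MvPolynomial (Fin n) ℂ) L) :=
    IsFractionRing.injective _ L
  have hvs (i : Fin k) : ∑ r, MvPolynomial.pderiv r (fs i) * v r = 0 :=
    hinj (by rw [hsum, hfs, mul_zero, map_zero])
  have hvf : ∑ r, MvPolynomial.pderiv r f * v r = 0 := by
    refine hU.eq_zero_of_eval_eq_zero hne fun x hx ↦ ?_
    let φ : (Fin n → ℂ) →ₗ[ℂ] ℂ := Fintype.linearCombination ℂ fun r ↦ MvPolynomial.eval x (v r)
    have hφ (p : MvPolynomial (Fin n) ℂ) :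
        φ (fun r ↦ MvPolynomial.eval x (MvPolynomial.pderiv r p)) =
        MvPolynomial.eval x (∑ r, MvPolynomial.pderiv r p * v r) := by
      simp [φ, Fintype.linearCombination_apply]
    rw [← hφ]
    refine (Submodule.span_le (p := LinearMap.ker φ)).2 ?_ (hgrad x hx)
    rintro _ ⟨i, rfl⟩
    exact (hφ (fs i)).trans (by rw [hvs, map_zero])
  have hbd := hsum f
  rw [hvf, map_zero, eq_comm, mul_eq_zero] at hbd
  exact hbd.resolve_left fun h ↦ nonZeroDivisors.coe_ne_zero b (hinj (by rw [h, map_zero]))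

/-- If on a nonempty Zariski-open set the gradient of `f` lies in the span of the
gradients of `f₁,…,f_k`, then `f` is algebraic over the subfield `ℂ(f₁,…,f_k)` of
the field of rational functions `ℂ(x₁,…,xₙ)`. -/
theorem algebraic_of_gradient_in_span
    {n k : ℕ} (f : MvPolynomial (Fin n) ℂ) (fs : Fin k → MvPolynomial (Fin n) ℂ)
    (U : Set (Fin n → ℂ)) (hU : IsZariskiOpen U) (hne : U.Nonempty)
    (hgrad : ∀ x ∈ U,
      (fun r : Fin n => MvPolynomial.eval x (MvPolynomial.pderiv r f)) ∈
        Submodule.span ℂ (Set.range fun i : Fin k =>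
          (fun r : Fin n => MvPolynomial.eval x (MvPolynomial.pderiv r (fs i))))) :
    IsAlgebraic
      (IntermediateField.adjoin ℂ
        (Set.range fun i : Fin k =>
          algebraMap (MvPolynomial (Fin n) ℂ) (FractionRing (MvPolynomial (Fin n) ℂ)) (fs i)))
      (algebraMap (MvPolynomial (Fin n) ℂ) (FractionRing (MvPolynomial (Fin n) ℂ)) f) := by
  by_contra hf
  obtain ⟨d, hd⟩ := Transcendental.exists_derivation_ne_zero hf
  exact hd ((d.restrictScalars ℂ).eq_zero_of_gradient_in_span f fs hU hne hgrad fun i ↦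
    d.map_algebraMap ⟨_, IntermediateField.subset_adjoin ℂ _ ⟨i, rfl⟩⟩)
end

section
/- Let A ⊆ ℂ[x₁,…,xₙ] be a ℂ-subalgebra. Then for every point x ∈ ℂⁿ, the dimension of the ℂ-linear span of the set of gradients {∇f(x) : f ∈ A} is at most the transcendence degree of A over ℂ. -/
/-- The transcendence degree of an `R`-algebra `A`: the supremum of the cardinalities of
subsets of `A` that are algebraically independent over `R`. -/
noncomputable def trdeg (R A : Type*) [CommRing R] [CommRing A] [Algebra R A] : Cardinal :=
  ⨆ s : {s : Set A // AlgebraicIndependent R ((↑) : s → A)}, Cardinal.mk s.1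

open MvPolynomial in
/-- Partial differentiation lowers the total degree. -/
theorem MvPolynomial.totalDegree_pderiv_le {σ R : Type*} [CommSemiring R]
    (i : σ) (p : MvPolynomial σ R) : (pderiv i p).totalDegree ≤ p.totalDegree - 1 := by
  refine Finset.sup_le fun m hm => ?_
  rw [mem_support_iff, coeff_pderiv] at hm
  have hle := le_totalDegree (mem_support_iff.2 (left_ne_zero_of_mul hm))
  rw [Finsupp.sum_add_index' (fun _ => rfl) (fun _ _ _ => rfl),
    Finsupp.sum_single_index rfl] at hle
  exact Nat.le_sub_of_add_le hle

open MvPolynomial in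
/-- In characteristic zero, a polynomial all of whose partial derivatives vanish is constant. -/
theorem MvPolynomial.eq_C_of_pderiv_eq_zero {σ K : Type*} [Field K] [CharZero K]
    {p : MvPolynomial σ K} (hp : ∀ i, pderiv i p = 0) : p = C (coeff 0 p) := by
  classical
  ext m
  rw [coeff_C]
  split_ifs with hm
  · rw [hm]
  · obtain ⟨i, hi⟩ := Finsupp.ne_iff.1 (Ne.symm hm)
    have h1 : m - Finsupp.single i 1 + Finsupp.single i 1 = m :=
      tsub_add_cancel_of_le (Finsupp.single_le_iff.2 (Nat.one_le_iff_ne_zero.2 hi))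
    have h := congrArg (coeff (m - Finsupp.single i 1)) (hp i)
    rw [coeff_pderiv, h1, coeff_zero] at h
    exact (mul_eq_zero.1 h).resolve_right (Nat.cast_add_one_ne_zero _)

open MvPolynomial in
/-- The chain rule for a derivation applied to a polynomial expression. -/
theorem MvPolynomial.derivation_aeval {ι R B M : Type*} [Fintype ι] [CommRing R] [CommRing B]
    [Algebra R B] [AddCommGroup M] [Module R M] [Module B M] (D : Derivation R B M)
    (f : ι → B) (p : MvPolynomial ι R) :
    D (aeval f p) = ∑ i, aeval f (pderiv i p) • D (f i) := by
  classical
  induction p using MvPolynomial.induction_on with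
  | C a => simp
  | add p q hp hq => simp only [map_add, hp, hq, add_smul, Finset.sum_add_distrib]
  | mul_X p j hp =>
    simp only [map_mul, aeval_X, Derivation.leibniz, hp, pderiv_X, smul_eq_mul, map_add,
      add_smul, Finset.sum_add_distrib, Finset.smul_sum, mul_smul, Pi.single_apply]
    simp [apply_ite, ite_smul]

open MvPolynomial in
/-- Polynomial vectors whose values at some point are linearly independent over the base field
are linearly independent over the polynomial ring. -/
theorem MvPolynomial.linearIndependent_of_eval {σ ι κ K : Type*} [Fintype ι] [Fintype κ]
    [Field K] (M : ι → κ → MvPolynomial σ K) (x : σ → K)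
    (h : LinearIndependent K fun i k => eval x (M i k)) :
    LinearIndependent (MvPolynomial σ K) M := by
  classical
  obtain ⟨B, hB⟩ : ∃ B : Matrix κ ι K, (Matrix.of M).map (eval x) * B = 1 := by
    obtain ⟨g, hg⟩ := LinearMap.exists_leftInverse_of_injective
      ((Matrix.of M).map (eval x)).vecMulLinear
      (LinearMap.ker_eq_bot.2 (Matrix.vecMul_injective_iff.2 h))
    refine ⟨LinearMap.toMatrixRight' g, ?_⟩
    apply Matrix.toLinearMapRight'.injective
    rw [Matrix.toLinearMapRight'_mul, Matrix.toLinearMapRight'_one, ← hg]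
    congr 1
    exact Matrix.toLinearMapRight'.apply_symm_apply g
  let B' : Matrix κ ι (MvPolynomial σ K) := B.map C
  have hdet : (Matrix.of M * B').det ≠ 0 := by
    intro h0
    have h1 := congrArg (eval x) h0
    rw [RingHom.map_det, RingHom.mapMatrix_apply, Matrix.map_mul] at h1
    have h2 : B'.map (eval x) = B := by ext; simp [B']
    rw [h2, hB] at h1
    simp at h1
  refine Matrix.vecMul_injective_iff.1 ?_
  refine (injective_iff_map_eq_zero (Matrix.of M).vecMulLinear).2 fun v hv => ?_
  refine Matrix.eq_zero_of_vecMul_eq_zero hdet ?_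
  rw [Matrix.vecMulLinear_apply] at hv
  rw [← Matrix.vecMul_vecMul, hv, Matrix.zero_vecMul]

open MvPolynomial in
/-- The Jacobian criterion: polynomials in characteristic zero whose gradients at some point are
linearly independent are algebraically independent. -/
theorem MvPolynomial.algebraicIndependent_of_linearIndependent_gradient {σ ι K : Type*}
    [Fintype σ] [Fintype ι] [Field K] [CharZero K] (f : ι → MvPolynomial σ K) (x : σ → K)
    (h : LinearIndependent K fun i r => eval x (pderiv r (f i))) :
    AlgebraicIndependent K f := by
  have hind := linearIndependent_of_eval (fun i r => pderiv r (f i)) x h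
  have hconst : ∀ p : MvPolynomial ι K, aeval f p = 0 → p = C (coeff 0 p) → p = 0 := by
    intro p hp hC
    rw [hC, aeval_C, algebraMap_eq, C_eq_zero] at hp
    rw [hC, hp, C_0]
  have key : ∀ (d : ℕ) (p : MvPolynomial ι K), p.totalDegree ≤ d → aeval f p = 0 → p = 0 := by
    intro d
    induction d with
    | zero =>
      exact fun p hd hp => hconst p hp (totalDegree_eq_zero_iff_eq_C.1 (Nat.le_zero.1 hd))
    | succ d ih =>
      refine fun p hd hp => hconst p hp (eq_C_of_pderiv_eq_zero fun i => ih _ ?_ ?_)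
      · exact (totalDegree_pderiv_le i p).trans (Nat.sub_le_of_le_add hd)
      · refine Fintype.linearIndependent_iff.1 hind (fun i => aeval f (pderiv i p)) ?_ i
        ext1 r
        have hchain := derivation_aeval (pderiv (R := K) r) f p
        rw [hp, map_zero] at hchain
        simpa using hchain.symm
  exact algebraicIndependent_iff.2 fun p => key _ p le_rfl

/-- For a `ℂ`-subalgebra `A ⊆ ℂ[x₁,…,xₙ]` and any point `x ∈ ℂⁿ`, the dimension of the
span of the gradients `∇f(x)`, `f ∈ A`, is at most the transcendence degree of `A` over `ℂ`. -/
theorem rank_span_gradients_le_trdeg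
    {n : ℕ} (A : Subalgebra ℂ (MvPolynomial (Fin n) ℂ)) (x : Fin n → ℂ) :
    Module.rank ℂ
        (Submodule.span ℂ {v : Fin n → ℂ | ∃ f ∈ A,
          v = fun r : Fin n => MvPolynomial.eval x (MvPolynomial.pderiv r f)}) ≤
      trdeg ℂ A := by
  obtain ⟨b, hb, hspan, hlin⟩ := exists_linearIndependent ℂ {v : Fin n → ℂ | ∃ f ∈ A,
    v = fun r : Fin n => MvPolynomial.eval x (MvPolynomial.pderiv r f)}
  rw [← hspan, rank_span_set hlin]
  choose g hgA hg using fun v : b => hb v.2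
  have : Finite b := hlin.finite
  have := Fintype.ofFinite b
  have hind : AlgebraicIndependent ℂ g :=
    MvPolynomial.algebraicIndependent_of_linearIndependent_gradient g x
      ((funext hg : ((↑) : b → Fin n → ℂ) = _) ▸ hlin)
  have hindA : AlgebraicIndependent ℂ fun v : b => (⟨g v, hgA v⟩ : A) :=
    AlgebraicIndependent.of_comp A.val hind
  refine le_ciSup_of_le Cardinal.bddAbove_of_small ⟨_, hindA.to_subtype_range⟩ ?_
  exact (Cardinal.mk_range_eq _ hindA.injective).ge
end

section
/- Let 𝔤 be a finite-dimensional complex Lie algebra. If C ⊆ S(𝔤) is a ℂ-subalgebra that is commutative with respect to the Lie–Poisson bracket, i.e. {f,g}(x) = 0 for all f, g ∈ C and all x ∈ 𝔤*, then the transcendence degree of C over ℂ satisfies trdeg C ≤ ½(dim 𝔤 + ind 𝔤). -/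
/-- The coadjoint stabilizer `𝔤_x = {ξ ∈ 𝔤 : ⟨x, [ξ, η]⟩ = 0 for all η ∈ 𝔤}`. -/
def coadjStab (L : Type*) [NormedAddCommGroup L] [NormedSpace ℂ L]
    (B : L →ₗ[ℂ] L →ₗ[ℂ] L) (x : L →L[ℂ] ℂ) : Submodule ℂ L where
  carrier := {ξ : L | ∀ η : L, x (B ξ η) = 0}
  add_mem' := by
    intro ξ ζ hξ hζ η
    simp [map_add, hξ η, hζ η]
  zero_mem' := by
    intro η
    simp
  smul_mem' := by
    intro c ξ hξ η
    simp [map_smul, hξ η]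

/-- The index of `𝔤`: `ind 𝔤 = min_{x ∈ 𝔤*} dim 𝔤_x`. -/
noncomputable def lieIndex (L : Type*) [NormedAddCommGroup L] [NormedSpace ℂ L]
    (B : L →ₗ[ℂ] L →ₗ[ℂ] L) : ℕ :=
  sInf (Set.range fun x : L →L[ℂ] ℂ => Module.finrank ℂ (coadjStab L B x))

/-- In characteristic zero, the differentials of algebraically independent elements are
linearly independent. -/
theorem AlgebraicIndependent.linearIndependent_D {k K ι : Type*} [Field k] [CharZero k]
    [Field K] [Algebra k K] [Algebra.EssFiniteType k K] {v : ι → K}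
    (hv : AlgebraicIndependent k v) :
    LinearIndependent K fun i => KaehlerDifferential.D k K (v i) := by
  let P := MvPolynomial ι k
  let : Algebra P K := (MvPolynomial.aeval v).toRingHom.toAlgebra
  have hmap : ∀ p : P, algebraMap P K p = MvPolynomial.aeval v p := fun _ => rfl
  have : IsScalarTower k P K := .of_algebraMap_eq fun r => by
    rw [hmap, MvPolynomial.algebraMap_eq, MvPolynomial.aeval_C]
  have : FaithfulSMul P K := (faithfulSMul_iff_algebraMap_injective P K).2 hv
  let F := FractionRing P
  let : Algebra F K := FractionRing.liftAlgebra P K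
  have : IsScalarTower P F K := inferInstance
  have : IsScalarTower k F K := IsScalarTower.to₁₃₄ k P F K
  have : CharZero F := charZero_of_injective_algebraMap (algebraMap k F).injective
  have : Algebra.EssFiniteType F K := Algebra.EssFiniteType.of_comp k F K
  have : Algebra.FormallySmooth F K := inferInstance
  have : Algebra.FormallySmooth P F := .of_isLocalization (nonZeroDivisors P)
  have : Algebra.FormallySmooth P K := .comp P F K
  have hinj : Function.Injective (KaehlerDifferential.mapBaseChange k P K) := by
    rw [injective_iff_map_eq_zero]
    intro x hx
    obtain ⟨x, rfl⟩ := (Algebra.H1Cotangent.exact_δ_mapBaseChange k P K x).mp hx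
    rw [Subsingleton.elim x 0, map_zero]
  have hb := ((KaehlerDifferential.mvPolynomialBasis k ι).baseChange K).linearIndependent.map'
    _ (LinearMap.ker_eq_bot.2 hinj)
  have hD : (fun i => KaehlerDifferential.D k K (v i)) = KaehlerDifferential.mapBaseChange k P K ∘
      (KaehlerDifferential.mvPolynomialBasis k ι).baseChange K := by
    funext i
    rw [Function.comp_apply, Module.Basis.baseChange_apply,
      KaehlerDifferential.mvPolynomialBasis_apply, KaehlerDifferential.mapBaseChange_tmul,
      KaehlerDifferential.map_D, one_smul, hmap, MvPolynomial.aeval_X]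
  rw [hD]
  exact hb

theorem MvPolynomial.derivation_apply_eq_sum_pderiv {R σ M : Type*} [CommRing R] [Fintype σ]
    [AddCommGroup M] [Module R M] [Module (MvPolynomial σ R) M]
    [IsScalarTower R (MvPolynomial σ R) M]
    (D : Derivation R (MvPolynomial σ R) M) (p : MvPolynomial σ R) :
    D p = ∑ i, pderiv i p • D (X i) := by
  have h := congrArg D.liftKaehlerDifferential
    ((KaehlerDifferential.mvPolynomialBasis R σ).sum_repr (KaehlerDifferential.D R _ p))
  simpa using h.symm

/-- **Jacobian criterion**: in characteristic zero, the gradients of algebraically independent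
polynomials are linearly independent over the field of rational functions. -/
theorem AlgebraicIndependent.linearIndependent_pderiv {k σ ι : Type*} [Field k] [CharZero k]
    [Finite σ] (K : Type*) [Field K] [Algebra (MvPolynomial σ k) K]
    [IsFractionRing (MvPolynomial σ k) K]
    {f : ι → MvPolynomial σ k} (hf : AlgebraicIndependent k f) :
    LinearIndependent K fun i => fun m : σ => algebraMap (MvPolynomial σ k) K
      (MvPolynomial.pderiv m (f i)) := by
  have := Fintype.ofFinite σ
  let A := MvPolynomial σ k
  let : Algebra k K := ((algebraMap A K).comp (algebraMap k A)).toAlgebra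
  have : IsScalarTower k A K := .of_algebraMap_eq fun r => rfl
  have : Algebra.EssFiniteType A K := .of_isLocalization _ (nonZeroDivisors A)
  have : Algebra.EssFiniteType k K := .comp k A K
  have hK : AlgebraicIndependent k (fun i => algebraMap A K (f i)) :=
    hf.map' (f := IsScalarTower.toAlgHom k A K) (IsFractionRing.injective A K)
  refine LinearIndependent.of_comp (Fintype.linearCombination K
    fun m : σ => KaehlerDifferential.D k K (algebraMap A K (MvPolynomial.X m))) ?_
  convert hK.linearIndependent_D with i
  rw [Function.comp, Fintype.linearCombination_apply]
  have := MvPolynomial.derivation_apply_eq_sum_pderiv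
    ((KaehlerDifferential.D k K).compAlgebraMap A) (f i)
  simp only [algebraMap_smul]
  exact this.symm

open Matrix in
/-- The rank of a matrix does not increase under specialization. -/
theorem Matrix.rank_map_le_rank_map_fractionRing {k A K n : Type*} [Field k] [CommRing A]
    [IsDomain A] [Algebra k A] [Field K] [Algebra A K] [IsFractionRing A K] [Fintype n]
    (φ : A →ₐ[k] k) (M : Matrix n n A) :
    (M.map φ).rank ≤ (M.map (algebraMap A K)).rank := by
  classical
  obtain ⟨V, U, e, -, -, h⟩ := (M.map φ).exists_rank_normal_form
  let r := (M.map φ).rank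
  let i : Fin r → n := fun a => e.symm (.inl a)
  let V' : Matrix (Fin r) n A := (V.submatrix i id).map (algebraMap k A)
  let U' : Matrix n (Fin r) A := (U.submatrix id i).map (algebraMap k A)
  have hone : (V' * M * U').map φ = 1 := by
    have hV : V'.map φ = V.submatrix i id := by ext; simp [V']
    have hU : U'.map φ = U.submatrix id i := by ext; simp [U']
    rw [Matrix.map_mul, Matrix.map_mul, hV, hU]
    have := congrArg (fun N : Matrix n n k => N.submatrix i i) h
    rw [Matrix.submatrix_mul _ _ _ id _ Function.bijective_id,
      Matrix.submatrix_mul _ _ _ id _ Function.bijective_id] at this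
    simp only [submatrix_id_id] at this
    rw [this]
    ext a b
    simp [i, Matrix.one_apply]
  have hdet : (V' * M * U').det ≠ 0 := by
    intro h0
    have := φ.map_det (V' * M * U')
    rw [h0, map_zero, AlgHom.mapMatrix_apply, hone, det_one] at this
    exact zero_ne_one this
  have hdetK : ((V' * M * U').map (algebraMap A K)).det ≠ 0 := by
    rw [← RingHom.mapMatrix_apply, ← RingHom.map_det]
    exact (map_ne_zero_iff _ (IsFractionRing.injective A K)).2 hdet
  have hr := rank_of_det_ne_zero  hdetK
  rw [Matrix.map_mul, Matrix.map_mul, Fintype.card_fin] at hr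
  exact hr.symm.le.trans ((rank_mul_le_left _ _).trans (rank_mul_le_right _ _))

open Matrix in
/-- **Sylvester rank inequality**. -/
theorem Matrix.rank_add_rank_le_rank_mul_add_card {K l m n : Type*} [Field K] [Finite l]
    [Fintype m] [Fintype n] (A : Matrix l m K) (B : Matrix m n K) :
    A.rank + B.rank ≤ (A * B).rank + Fintype.card m := by
  have hA := A.mulVecLin.finrank_range_add_finrank_ker
  have hAB := (A.mulVecLin.domRestrict B.mulVecLin.range).finrank_range_add_finrank_ker
  have hrange : (A.mulVecLin.domRestrict B.mulVecLin.range).range = (A * B).mulVecLin.range := by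
    rw [LinearMap.range_domRestrict, mulVecLin_mul, LinearMap.range_comp]
  have hker : Module.finrank K (A.mulVecLin.domRestrict B.mulVecLin.range).ker ≤
      Module.finrank K A.mulVecLin.ker := by
    rw [LinearMap.ker_domRestrict]
    rw [← Submodule.finrank_map_subtype_eq]
    exact Submodule.finrank_mono (Submodule.map_comap_le _ _)
  rw [hrange] at hAB
  rw [Module.finrank_fintype_fun_eq_card] at hA
  simp only [Matrix.rank]
  omega

open Matrix in
/-- A bound for the dimension of a totally isotropic subspace of a bilinear form. -/
theorem Matrix.two_mul_card_add_rank_le {K n ι : Type*} [Field K] [Fintype n] [Fintype ι]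
    (M : Matrix n n K) (V : Matrix ι n K) (hV : LinearIndependent K V.row)
    (h : V * M * Vᵀ = 0) :
    2 * Fintype.card ι + M.rank ≤ 2 * Fintype.card n := by
  have h₁ := rank_add_rank_le_card_of_mul_eq_zero h
  have h₂ := rank_add_rank_le_rank_mul_add_card V M
  rw [rank_transpose] at h₁
  rw [hV.rank_matrix] at h₁ h₂
  omega

/-- The polynomial function on the dual of `L` given by a polynomial in the coordinates
with respect to a basis of `L`. -/
noncomputable def polyFun {L σ : Type*} [NormedAddCommGroup L] [NormedSpace ℂ L]
    (b : σ → L) : MvPolynomial σ ℂ →ₐ[ℂ] ((L →L[ℂ] ℂ) → ℂ) :=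
  MvPolynomial.aeval fun i x => x (b i)

theorem polyFun_apply {L σ : Type*} [NormedAddCommGroup L] [NormedSpace ℂ L]
    (b : σ → L) (p : MvPolynomial σ ℂ) (x : L →L[ℂ] ℂ) :
    polyFun b p x = MvPolynomial.eval (fun i => x (b i)) p := by
  induction p using MvPolynomial.induction_on <;> simp_all [polyFun]

theorem IsPolyFun.exists_polyFun_eq {L σ : Type*} [NormedAddCommGroup L] [NormedSpace ℂ L]
    [Fintype σ] (b : Module.Basis σ ℂ L) {p : (L →L[ℂ] ℂ) → ℂ} (hp : IsPolyFun L p) :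
    ∃ P, polyFun b P = p := by
  have hle : Algebra.adjoin ℂ (Set.range fun ξ : L => fun x : L →L[ℂ] ℂ => x ξ) ≤
      (polyFun b).range := by
    refine Algebra.adjoin_le ?_
    rintro _ ⟨ξ, rfl⟩
    refine ⟨∑ i, MvPolynomial.C (b.repr ξ i) * MvPolynomial.X i, ?_⟩
    funext x
    have h := congrArg x (b.sum_repr ξ)
    simpa [polyFun_apply, -Module.Basis.sum_repr] using h
  exact hle hp

theorem hasFDerivAt_polyFun {L σ : Type*} [NormedAddCommGroup L] [NormedSpace ℂ L]
    [Fintype σ] (b : σ → L) (p : MvPolynomial σ ℂ) (x : L →L[ℂ] ℂ) :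
    HasFDerivAt (polyFun b p) (ContinuousLinearMap.apply ℂ ℂ
      (∑ i, MvPolynomial.eval (fun i => x (b i)) (MvPolynomial.pderiv i p) • b i)) x := by
  classical
  induction p using MvPolynomial.induction_on with
  | C a =>
    have h : polyFun b (MvPolynomial.C a) = fun _ => a := by
      funext y; simp [polyFun_apply]
    rw [h]
    exact (hasFDerivAt_const a x).congr_fderiv (by simp)
  | add p q hp hq =>
    rw [map_add]
    refine (hp.add hq).congr_fderiv ?_
    simp [add_smul, Finset.sum_add_distrib]
  | mul_X p j hp =>
    rw [map_mul]
    have hX : HasFDerivAt (polyFun b (MvPolynomial.X j))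
        (ContinuousLinearMap.apply ℂ ℂ (b j)) x := by
      convert (ContinuousLinearMap.apply ℂ ℂ (b j)).hasFDerivAt using 1
      funext y; simp [polyFun_apply]
    refine (hp.mul hX).congr_fderiv ?_
    ext v
    simp [polyFun_apply, MvPolynomial.pderiv_X, Pi.single_apply, add_smul, Finset.sum_add_distrib,
      Finset.mul_sum, mul_assoc, apply_ite]

theorem repDeriv_polyFun {L σ : Type*} [NormedAddCommGroup L] [NormedSpace ℂ L]
    [Fintype σ] (b : σ → L) (p : MvPolynomial σ ℂ) :
    RepDeriv L (polyFun b p) fun x =>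
      ∑ i, MvPolynomial.eval (fun i => x (b i)) (MvPolynomial.pderiv i p) • b i := by
  intro x v
  rw [(hasFDerivAt_polyFun b p x).fderiv]
  rfl

/-- The matrix of the Lie bracket, with entries in the coordinate ring of the dual. -/
noncomputable def bracketMatrix {L σ : Type*} [NormedAddCommGroup L] [NormedSpace ℂ L]
    [Fintype σ] (b : Module.Basis σ ℂ L) (B : L →ₗ[ℂ] L →ₗ[ℂ] L) :
    Matrix σ σ (MvPolynomial σ ℂ) :=
  .of fun i j => ∑ c, MvPolynomial.C (b.repr (B (b i) (b j)) c) * MvPolynomial.X c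

theorem eval_bracketMatrix {L σ : Type*} [NormedAddCommGroup L] [NormedSpace ℂ L]
    [Fintype σ] (b : Module.Basis σ ℂ L) (B : L →ₗ[ℂ] L →ₗ[ℂ] L) (x : L →L[ℂ] ℂ) (i j : σ) :
    MvPolynomial.eval (fun c => x (b c)) (bracketMatrix b B i j) = x (B (b i) (b j)) := by
  have h := congrArg x (b.sum_repr (B (b i) (b j)))
  simpa [bracketMatrix, -Module.Basis.sum_repr] using h

theorem exists_dual_eq {L σ : Type*} [NormedAddCommGroup L] [NormedSpace ℂ L]
    [FiniteDimensional ℂ L] (b : Module.Basis σ ℂ L) (y : σ → ℂ) :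
    ∃ x : L →L[ℂ] ℂ, (fun i => x (b i)) = y :=
  ⟨(b.constr ℂ y).toContinuousLinearMap, by funext i; simp⟩

theorem card_le_rank_add_finrank_coadjStab {L σ : Type*} [NormedAddCommGroup L]
    [NormedSpace ℂ L] [Fintype σ] (b : Module.Basis σ ℂ L)
    (B : L →ₗ[ℂ] L →ₗ[ℂ] L) (x : L →L[ℂ] ℂ) :
    Fintype.card σ ≤ ((bracketMatrix b B).map
      (MvPolynomial.aeval (R := ℂ) fun c => x (b c))).rank +
      Module.finrank ℂ (coadjStab L B x) := by
  have := Module.Finite.of_basis b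
  set N := (bracketMatrix b B).map (MvPolynomial.aeval (R := ℂ) fun c => x (b c)) with hN
  have hentry : ∀ i j, N i j = x (B (b i) (b j)) := fun i j => by
    rw [hN, Matrix.map_apply, ← eval_bracketMatrix, MvPolynomial.aeval_eq_eval]
  let T : L →ₗ[ℂ] σ → ℂ := N.transpose.mulVecLin ∘ₗ b.equivFun.toLinearMap
  have hT : ∀ ξ j, T ξ j = x (B ξ (b j)) := fun ξ j => by
    have h := congrArg (fun ζ => x (B ζ (b j))) (b.sum_repr ξ)
    simpa [T, Matrix.vecMul, dotProduct, hentry, -Module.Basis.sum_repr] using h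
  have hker : T.ker ≤ coadjStab L B x := by
    intro ξ hξ η
    have hξ : ∀ j, x (B ξ (b j)) = 0 := fun j => by rw [← hT, LinearMap.mem_ker.1 hξ]; rfl
    have h := congrArg (fun ζ => x (B ξ ζ)) (b.sum_repr η)
    simpa [hξ, -Module.Basis.sum_repr] using h.symm
  have hrank : Module.finrank ℂ T.range = N.rank := by
    rw [← Matrix.rank_transpose, Matrix.rank,
      LinearMap.range_comp_of_range_eq_top _ (LinearEquiv.range _)]
  have h := T.finrank_range_add_finrank_ker
  rw [hrank, Module.finrank_eq_card_basis b] at h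
  have := Submodule.finrank_mono hker
  omega

theorem two_mul_card_le_of_poisson_commutative {L ι σ : Type*} [NormedAddCommGroup L]
    [NormedSpace ℂ L] [FiniteDimensional ℂ L] [Fintype σ] [Fintype ι]
    (b : Module.Basis σ ℂ L) (B : L →ₗ[ℂ] L →ₗ[ℂ] L)
    (f : ι → MvPolynomial σ ℂ) (hf : AlgebraicIndependent ℂ f)
    (hcomm : ∀ i j, ∀ dp dq : (L →L[ℂ] ℂ) → L,
      RepDeriv L (polyFun b (f i)) dp → RepDeriv L (polyFun b (f j)) dq →
      ∀ x : L →L[ℂ] ℂ, x (B (dp x) (dq x)) = 0) :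
    2 * Fintype.card ι ≤ Module.finrank ℂ L + lieIndex L B := by
  let A := MvPolynomial σ ℂ
  let K := FractionRing A
  let J : Matrix ι σ A := .of fun i m => MvPolynomial.pderiv m (f i)
  have hiso : J * bracketMatrix b B * J.transpose = 0 := by
    ext1 i j
    refine MvPolynomial.funext fun y => ?_
    obtain ⟨x, rfl⟩ := exists_dual_eq b y
    have h := hcomm i j _ _ (repDeriv_polyFun b (f i)) (repDeriv_polyFun b (f j)) x
    simp only [map_sum, map_smul, LinearMap.sum_apply, LinearMap.smul_apply, smul_eq_mul,
      ← eval_bracketMatrix b B] at h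
    rw [Matrix.zero_apply, map_zero, ← h]
    simp only [Matrix.mul_apply, Matrix.transpose_apply, map_sum, map_mul, J, Matrix.of_apply,
      Finset.sum_mul, Finset.mul_sum]
    refine Finset.sum_congr rfl fun a _ => Finset.sum_congr rfl fun c _ => ?_
    ring
  have hK := congrArg (fun M : Matrix ι ι A => M.map (algebraMap A K)) hiso
  simp only [Matrix.map_mul, Matrix.map_zero _ (map_zero _)] at hK
  have h₁ := Matrix.two_mul_card_add_rank_le _ _ (hf.linearIndependent_pderiv K) hK
  obtain ⟨x, hx⟩ : lieIndex L B ∈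
      Set.range fun x : L →L[ℂ] ℂ => Module.finrank ℂ (coadjStab L B x) :=
    Nat.sInf_mem (Set.range_nonempty _)
  have h₂ := card_le_rank_add_finrank_coadjStab b B x
  have h₃ := Matrix.rank_map_le_rank_map_fractionRing (A := A) (K := K)
    (MvPolynomial.aeval (R := ℂ) fun c => x (b c)) (bracketMatrix b B)
  simp only at hx
  rw [Module.finrank_eq_card_basis b]
  omega

/-- If `C ⊆ S(𝔤)` is a subalgebra commutative w.r.t. the Lie–Poisson bracket
`{p,q}(x) = ⟨x, [dp(x), dq(x)]⟩`, then `trdeg C ≤ ½ (dim 𝔤 + ind 𝔤)`, i.e.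
`2 · trdeg C ≤ dim 𝔤 + ind 𝔤`. -/
theorem trdeg_le_of_poisson_commutative
    {L : Type*} [NormedAddCommGroup L] [NormedSpace ℂ L] [FiniteDimensional ℂ L]
    (B : L →ₗ[ℂ] L →ₗ[ℂ] L) (hB : IsLieBracket L B)
    (C : Subalgebra ℂ ((L →L[ℂ] ℂ) → ℂ))
    (hpoly : ∀ p ∈ C, IsPolyFun L p)
    (hcomm : ∀ p ∈ C, ∀ q ∈ C, ∀ dp dq : (L →L[ℂ] ℂ) → L,
      RepDeriv L p dp → RepDeriv L q dq →
      ∀ x : L →L[ℂ] ℂ, x (B (dp x) (dq x)) = 0) :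
    2 * trdeg ℂ C ≤ ((Module.finrank ℂ L + lieIndex L B : ℕ) : Cardinal) := by
  let b := Module.finBasis ℂ L
  have hcard : ∀ s : {s : Set C // AlgebraicIndependent ℂ ((↑) : s → C)},
      Cardinal.mk s.1 ≤ ((Module.finrank ℂ L + lieIndex L B) / 2 : ℕ) := by
    rintro ⟨s, hs⟩
    choose f hf using fun i : s => (hpoly _ i.1.2).exists_polyFun_eq b
    have hind : AlgebraicIndependent ℂ f := by
      refine AlgebraicIndependent.of_comp (polyFun b) ?_
      rw [show polyFun b ∘ f = C.val ∘ (↑) from funext hf]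
      exact hs.map' Subtype.val_injective
    have := (hind.linearIndependent_pderiv
      (FractionRing (MvPolynomial (Fin (Module.finrank ℂ L)) ℂ))).finite
    have := Fintype.ofFinite s
    rw [Cardinal.mk_fintype, Nat.cast_le, Nat.le_div_iff_mul_le two_pos, mul_comm]
    refine two_mul_card_le_of_poisson_commutative b B f hind fun i j => ?_
    rw [hf, hf]
    exact hcomm _ i.1.2 _ j.1.2
  calc 2 * trdeg ℂ C
      ≤ 2 * ((Module.finrank ℂ L + lieIndex L B) / 2 : ℕ) := by
        gcongr
        exact ciSup_le' hcard
    _ ≤ _ := by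
        norm_cast
        exact Nat.mul_div_le _ _
end
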